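/- arXiv:2506.16378 — 9 statements merged into one kernel-verified Lean document; each statement's English description precedes it below -/
import Mathlib

section
/- Let n > 2m ≥ 2 be integers and let β > 2m be real. Suppose φ : ℝⁿ → ℂ is measurable and there are constants C₁, C₂ > 0 such that |φ(x)| ≤ C₁⟨x⟩^{-β/2} for almost every x, and |φ(x)| ≤ C₂ ⟨x⟩^{-β/2} ∫_{ℝⁿ} |x−y|^{2m−n} ⟨y⟩^{-β/2} |φ(y)| dy for almost every x. Then there is a constant C (depending on n, m, β, C₁, C₂) such that |φ(x)| ≤ C ⟨x⟩^{2m−n−β/2} for almost every x ∈ ℝⁿ. -/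
open MeasureTheory

/-!
Write `⟨x⟩ = √(1 + ‖x‖²)`. The engine is the uniform bound
`sup_x ∫ ‖x - y‖^{-a} ⟨y⟩^{-b} dy < ∞` for `0 ≤ a < n`, `0 ≤ b`, `a + b > n` (`kernel_bound`): near
`y = x` the singularity is integrable, and elsewhere the integrand is at most a constant times
`⟨x - y⟩^{-(a+b)} + ⟨y⟩^{-(a+b)}`. Since `⟨x⟩ ≤ ⟨y⟩ + ‖x - y‖`, a weight `⟨x⟩^t` can be split between
the two factors, which gives `∫ ‖x - y‖^{-α} ⟨y⟩^{-γ} dy ≲ ⟨x⟩^{-t}` for `0 ≤ t ≤ α` and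
`t < α + γ - n` (`kernel_decay`).

With `α = n - 2m`, feeding a bound `‖φ‖ ≲ ⟨x⟩^{-β/2-s}` into the integral inequality (so
`γ = β + s`) yields `‖φ‖ ≲ ⟨x⟩^{-β/2-t}` for every `t ≤ α` with `t < s + (β - 2m)`
(`decay_step`). Each step therefore gains `(β - 2m)/2 > 0`, without logarithmic losses, until `t = α` is
reached after finitely many steps.
-/

section Bracket

variable {E : Type*} [NormedAddCommGroup E]

lemma one_le_bracket (x : E) : 1 ≤ Real.sqrt (1 + ‖x‖ ^ 2) :=
  Real.one_le_sqrt.2 (by nlinarith [sq_nonneg ‖x‖])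

lemma bracket_pos (x : E) : 0 < Real.sqrt (1 + ‖x‖ ^ 2) :=
  one_pos.trans_le (one_le_bracket x)

lemma bracket_le_add (x y : E) :
    Real.sqrt (1 + ‖x‖ ^ 2) ≤ Real.sqrt (1 + ‖y‖ ^ 2) + ‖x - y‖ := by
  have h1 : ‖x‖ ≤ ‖y‖ + ‖x - y‖ := norm_le_norm_add_norm_sub' x y
  have h2 : ‖y‖ ≤ Real.sqrt (1 + ‖y‖ ^ 2) := Real.le_sqrt_of_sq_le (by linarith)
  have h3 := Real.sq_sqrt (show 0 ≤ 1 + ‖y‖ ^ 2 by positivity)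
  rw [Real.sqrt_le_left (by positivity)]
  have := pow_le_pow_left₀ (norm_nonneg x) h1 2
  nlinarith [mul_le_mul_of_nonneg_right h2 (norm_nonneg (x - y))]

end Bracket

/-- The larger of `u`, `v` may be replaced by the smaller one in `u ^ (-a) * v ^ (-b)`. -/
lemma rpow_neg_mul_rpow_neg_le {u v a b : ℝ} (hu : 0 < u) (hv : 0 < v) (ha : 0 ≤ a) (hb : 0 ≤ b) :
    u ^ (-a) * v ^ (-b) ≤ u ^ (-(a + b)) + v ^ (-(a + b)) := by
  have e : -(a + b) = -a + -b := by ring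
  rw [e, Real.rpow_add hu, Real.rpow_add hv]
  rcases le_total u v with h | h
  · have : v ^ (-b) ≤ u ^ (-b) := Real.rpow_le_rpow_of_nonpos hu h (by linarith)
    have : u ^ (-a) * v ^ (-b) ≤ u ^ (-a) * u ^ (-b) := by gcongr
    have : 0 ≤ v ^ (-a) * v ^ (-b) := by positivity
    linarith
  · have : u ^ (-a) ≤ v ^ (-a) := Real.rpow_le_rpow_of_nonpos hv h (by linarith)
    have : u ^ (-a) * v ^ (-b) ≤ v ^ (-a) * v ^ (-b) := by gcongr
    have : 0 ≤ u ^ (-a) * u ^ (-b) := by positivity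
    linarith

lemma add_rpow_le_two_rpow_mul {u v t : ℝ} (hu : 0 ≤ u) (hv : 0 ≤ v) (ht : 0 ≤ t) :
    (u + v) ^ t ≤ 2 ^ t * (u ^ t + v ^ t) := by
  have hu' := Real.rpow_nonneg hu t
  have hv' := Real.rpow_nonneg hv t
  rcases le_total u v with h | h
  · calc (u + v) ^ t ≤ (2 * v) ^ t := by gcongr; linarith
      _ = 2 ^ t * v ^ t := Real.mul_rpow (by norm_num) hv
      _ ≤ _ := by gcongr; linarith
  · calc (u + v) ^ t ≤ (2 * u) ^ t := by gcongr; linarith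
      _ = 2 ^ t * u ^ t := Real.mul_rpow (by norm_num) hu
      _ ≤ _ := by gcongr; linarith

lemma integrable_bracket_rpow {n : ℕ} {r : ℝ} (hr : (n : ℝ) < r) :
    Integrable (fun y : EuclideanSpace ℝ (Fin n) => Real.sqrt (1 + ‖y‖ ^ 2) ^ (-r)) := by
  have h := integrable_rpow_neg_one_add_norm_sq (E := EuclideanSpace ℝ (Fin n))
    (μ := volume) (r := r) (by simpa using hr)
  refine h.congr (Filter.Eventually.of_forall fun y => ?_)
  exact Real.rpow_div_two_eq_sqrt (-r) (by positivity)

lemma integrable_indicator_norm_rpow {n : ℕ} (hn : 0 < n) {a : ℝ} (ha : a < n) :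
    Integrable (fun z : EuclideanSpace ℝ (Fin n) =>
      (Set.Iio (1 : ℝ)).indicator (fun r : ℝ => r ^ (-a)) ‖z‖) := by
  have : Nonempty (Fin n) := ⟨⟨0, hn⟩⟩
  rw [integrable_fun_norm_addHaar volume (f := (Set.Iio (1 : ℝ)).indicator fun r : ℝ => r ^ (-a)),
    finrank_euclideanSpace_fin]
  have h : IntegrableOn (fun r : ℝ => r ^ ((n : ℝ) - 1 - a)) (Set.Ioo 0 1) :=
    (intervalIntegral.integrableOn_Ioo_rpow_iff one_pos).2 (by linarith)
  rw [← integrable_indicator_iff measurableSet_Ioo] at h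
  refine h.integrableOn.congr_fun (fun r (hr : 0 < r) => ?_) measurableSet_Ioi
  by_cases hr1 : r < 1
  · have e : (n : ℝ) - 1 - a = ((n - 1 : ℕ) : ℝ) + -a := by
      rw [Nat.cast_sub hn]; push_cast; ring
    simp [hr, hr1, e, Real.rpow_add hr]
  · simp [hr1]

/-- Uniform bound for the convolution of `‖·‖^{-a}` with a bracket weight of order `b`, when the
singularity is locally integrable and the total decay `a + b` beats the dimension. -/
lemma kernel_bound {n : ℕ} (hn : 0 < n) {a b : ℝ} (ha : 0 ≤ a) (han : a < n) (hb : 0 ≤ b)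
    (hab : (n : ℝ) < a + b) :
    ∃ K > (0 : ℝ), ∀ x : EuclideanSpace ℝ (Fin n),
      Integrable (fun y => ‖x - y‖ ^ (-a) * Real.sqrt (1 + ‖y‖ ^ 2) ^ (-b)) ∧
      ∫ y, ‖x - y‖ ^ (-a) * Real.sqrt (1 + ‖y‖ ^ 2) ^ (-b) ≤ K := by
  set f : EuclideanSpace ℝ (Fin n) → ℝ := fun z =>
    (Set.Iio (1 : ℝ)).indicator (fun r : ℝ => r ^ (-a)) ‖z‖ with hf
  set g : EuclideanSpace ℝ (Fin n) → ℝ := fun z => Real.sqrt (1 + ‖z‖ ^ 2) ^ (-(a + b)) with hg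
  have hfi : Integrable f := integrable_indicator_norm_rpow hn han
  have hgi : Integrable g := integrable_bracket_rpow hab
  have hf0 : ∀ z, 0 ≤ f z := fun z =>
    Set.indicator_apply_nonneg fun _ => Real.rpow_nonneg (norm_nonneg z) _
  have hg0 : ∀ z, 0 ≤ g z := fun z => Real.rpow_nonneg (Real.sqrt_nonneg _) _
  have hdom : ∀ x y : EuclideanSpace ℝ (Fin n),
      ‖x - y‖ ^ (-a) * Real.sqrt (1 + ‖y‖ ^ 2) ^ (-b) ≤
        f (x - y) + 2 ^ a * (g (x - y) + g y) := by
    intro x y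
    have hg1 := hg0 (x - y)
    have hg2 := hg0 y
    by_cases hxy : ‖x - y‖ < 1
    · have h1 : Real.sqrt (1 + ‖y‖ ^ 2) ^ (-b) ≤ 1 :=
        Real.rpow_le_one_of_one_le_of_nonpos (one_le_bracket y) (by linarith)
      have h2 : f (x - y) = ‖x - y‖ ^ (-a) := Set.indicator_of_mem (Set.mem_Iio.2 hxy) _
      have h3 : 0 ≤ ‖x - y‖ ^ (-a) := by positivity
      have h4 : 0 ≤ 2 ^ a * (g (x - y) + g y) := by positivity
      rw [h2]
      nlinarith
    · push Not at hxy
      have h1 : Real.sqrt (1 + ‖x - y‖ ^ 2) / 2 ≤ ‖x - y‖ := by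
        have := sqrt_one_add_norm_sq_le (x - y)
        linarith
      have h2 : ‖x - y‖ ^ (-a) ≤ 2 ^ a * Real.sqrt (1 + ‖x - y‖ ^ 2) ^ (-a) := by
        calc ‖x - y‖ ^ (-a) ≤ (Real.sqrt (1 + ‖x - y‖ ^ 2) / 2) ^ (-a) :=
              Real.rpow_le_rpow_of_nonpos (half_pos (bracket_pos _)) h1 (by linarith)
          _ = _ := by
              rw [Real.div_rpow (Real.sqrt_nonneg _) (by norm_num), Real.rpow_neg (x := 2) (by norm_num)]
              field_simp
      calc ‖x - y‖ ^ (-a) * Real.sqrt (1 + ‖y‖ ^ 2) ^ (-b)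
          ≤ 2 ^ a * Real.sqrt (1 + ‖x - y‖ ^ 2) ^ (-a) * Real.sqrt (1 + ‖y‖ ^ 2) ^ (-b) := by gcongr
        _ = 2 ^ a * (Real.sqrt (1 + ‖x - y‖ ^ 2) ^ (-a) * Real.sqrt (1 + ‖y‖ ^ 2) ^ (-b)) := by ring
        _ ≤ 2 ^ a * (g (x - y) + g y) := by
            gcongr
            exact rpow_neg_mul_rpow_neg_le (bracket_pos _) (bracket_pos _) ha hb
        _ ≤ _ := le_add_of_nonneg_left (hf0 _)
  have hD : ∀ x, Integrable (fun y => f (x - y) + 2 ^ a * (g (x - y) + g y)) := fun x =>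
    (hfi.comp_sub_left x).add (((hgi.comp_sub_left x).add hgi).const_mul _)
  have hnn : ∀ x y : EuclideanSpace ℝ (Fin n),
      0 ≤ ‖x - y‖ ^ (-a) * Real.sqrt (1 + ‖y‖ ^ 2) ^ (-b) := fun x y => by positivity
  have hK0 : 0 ≤ ∫ y, f y := integral_nonneg hf0
  have hK1 : 0 ≤ ∫ y, g y := integral_nonneg hg0
  refine ⟨(∫ y, f y) + 2 ^ a * ((∫ y, g y) + ∫ y, g y) + 1, by positivity, fun x => ⟨?_, ?_⟩⟩
  · refine (hD x).mono' (Measurable.aestronglyMeasurable (by fun_prop))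
      (Filter.Eventually.of_forall fun y => ?_)
    rw [Real.norm_of_nonneg (hnn x y)]
    exact hdom x y
  · calc ∫ y, ‖x - y‖ ^ (-a) * Real.sqrt (1 + ‖y‖ ^ 2) ^ (-b)
        ≤ ∫ y, (f (x - y) + 2 ^ a * (g (x - y) + g y)) :=
          integral_mono_of_nonneg (Filter.Eventually.of_forall (hnn x)) (hD x)
            (Filter.Eventually.of_forall (hdom x))
      _ = (∫ y, f y) + 2 ^ a * ((∫ y, g y) + ∫ y, g y) := by
          have hgg : Integrable fun y => 2 ^ a * (g (x - y) + g y) :=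
            ((hgi.comp_sub_left x).add hgi).const_mul _
          rw [integral_add (hfi.comp_sub_left x) hgg, integral_const_mul,
            integral_add (hgi.comp_sub_left x) hgi, integral_sub_left_eq_self f volume x,
            integral_sub_left_eq_self g volume x]
      _ ≤ _ := by linarith

/-- Decay of the Riesz potential of a bracket weight. The condition `t < α + γ - n` is strict, which
excludes the borderline case carrying a logarithm. -/
lemma kernel_decay {n : ℕ} (hn : 0 < n) {α γ t : ℝ} (ht : 0 ≤ t) (htα : t ≤ α) (hαn : α < n)
    (h : (n : ℝ) < α + γ - t) :
    ∃ K > (0 : ℝ), ∀ x : EuclideanSpace ℝ (Fin n),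
      Integrable (fun y => ‖x - y‖ ^ (-α) * Real.sqrt (1 + ‖y‖ ^ 2) ^ (-γ)) ∧
      ∫ y, ‖x - y‖ ^ (-α) * Real.sqrt (1 + ‖y‖ ^ 2) ^ (-γ) ≤
        K * Real.sqrt (1 + ‖x‖ ^ 2) ^ (-t) := by
  obtain ⟨K₀, -, hK₀⟩ := kernel_bound hn (a := α) (b := γ) (by linarith) hαn (by linarith)
    (by linarith)
  obtain ⟨K₁, hK₁p, hK₁⟩ := kernel_bound hn (a := α) (b := γ - t) (by linarith) hαn (by linarith)
    (by linarith)
  obtain ⟨K₂, hK₂p, hK₂⟩ := kernel_bound hn (a := α - t) (b := γ) (by linarith) (by linarith)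
    (by linarith) (by linarith)
  refine ⟨2 ^ t * (K₁ + K₂), by positivity, fun x => ⟨(hK₀ x).1, ?_⟩⟩
  have hx := bracket_pos x
  have hpt : ∀ y, Real.sqrt (1 + ‖x‖ ^ 2) ^ t *
      (‖x - y‖ ^ (-α) * Real.sqrt (1 + ‖y‖ ^ 2) ^ (-γ)) ≤
      2 ^ t * (‖x - y‖ ^ (-α) * Real.sqrt (1 + ‖y‖ ^ 2) ^ (-(γ - t)) +
        ‖x - y‖ ^ (-(α - t)) * Real.sqrt (1 + ‖y‖ ^ 2) ^ (-γ)) := by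
    intro y
    have hy := bracket_pos y
    have h1 : Real.sqrt (1 + ‖x‖ ^ 2) ^ t ≤
        2 ^ t * (Real.sqrt (1 + ‖y‖ ^ 2) ^ t + ‖x - y‖ ^ t) :=
      (Real.rpow_le_rpow hx.le (bracket_le_add x y) ht).trans
        (add_rpow_le_two_rpow_mul hy.le (norm_nonneg _) ht)
    have h2 : Real.sqrt (1 + ‖y‖ ^ 2) ^ (-(γ - t)) =
        Real.sqrt (1 + ‖y‖ ^ 2) ^ t * Real.sqrt (1 + ‖y‖ ^ 2) ^ (-γ) := by
      rw [← Real.rpow_add hy]; congr 1; ring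
    -- Only an inequality holds here: for `x = y` and `t = α > 0` the left side is `0`, the right `1`.
    have h3 : ‖x - y‖ ^ t * ‖x - y‖ ^ (-α) ≤ ‖x - y‖ ^ (-(α - t)) := by
      have := Real.le_rpow_add (norm_nonneg (x - y)) t (-α)
      rwa [show t + -α = -(α - t) by ring] at this
    calc _ ≤ 2 ^ t * (Real.sqrt (1 + ‖y‖ ^ 2) ^ t + ‖x - y‖ ^ t) *
          (‖x - y‖ ^ (-α) * Real.sqrt (1 + ‖y‖ ^ 2) ^ (-γ)) := by gcongr
      _ = 2 ^ t * (‖x - y‖ ^ (-α) *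
            (Real.sqrt (1 + ‖y‖ ^ 2) ^ t * Real.sqrt (1 + ‖y‖ ^ 2) ^ (-γ)) +
          (‖x - y‖ ^ t * ‖x - y‖ ^ (-α)) * Real.sqrt (1 + ‖y‖ ^ 2) ^ (-γ)) := by ring
      _ ≤ _ := by rw [h2]; gcongr
  have hI : Real.sqrt (1 + ‖x‖ ^ 2) ^ t *
      ∫ y, ‖x - y‖ ^ (-α) * Real.sqrt (1 + ‖y‖ ^ 2) ^ (-γ) ≤ 2 ^ t * (K₁ + K₂) := by
    rw [← integral_const_mul]
    refine (integral_mono ((hK₀ x).1.const_mul _)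
      (((hK₁ x).1.add (hK₂ x).1).const_mul _) hpt).trans ?_
    rw [integral_const_mul]
    gcongr
    refine (integral_add (hK₁ x).1 (hK₂ x).1).le.trans ?_
    exact add_le_add (hK₁ x).2 (hK₂ x).2
  rw [Real.rpow_neg hx.le, ← div_eq_mul_inv, le_div_iff₀ (by positivity)]
  linarith

/-- One step of the bootstrap: inserting decay `⟨x⟩^{-β/2-s}` into the integral inequality improves
it to `⟨x⟩^{-β/2-t}`, with a constant independent of `φ`. -/
lemma decay_step {n : ℕ} (hn : 0 < n) {α β s t C₂ C : ℝ} (hC₂ : 0 < C₂) (hC : 0 < C)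
    (ht : 0 ≤ t) (htα : t ≤ α) (hαn : α < n) (hts : t < s + (β - (n - α))) :
    ∃ D > (0 : ℝ), ∀ φ : EuclideanSpace ℝ (Fin n) → ℂ,
      (∀ᵐ x, ‖φ x‖ ≤ C * Real.sqrt (1 + ‖x‖ ^ 2) ^ (-β / 2 - s)) →
      (∀ᵐ x, ‖φ x‖ ≤ C₂ * Real.sqrt (1 + ‖x‖ ^ 2) ^ (-β / 2) *
          ∫ y, ‖x - y‖ ^ (-α) * Real.sqrt (1 + ‖y‖ ^ 2) ^ (-β / 2) * ‖φ y‖) →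
      ∀ᵐ x, ‖φ x‖ ≤ D * Real.sqrt (1 + ‖x‖ ^ 2) ^ (-β / 2 - t) := by
  obtain ⟨K, hK, hdecay⟩ := kernel_decay hn (γ := β + s) ht htα hαn (by linarith)
  refine ⟨C₂ * C * K, by positivity, fun φ h1 h2 => ?_⟩
  filter_upwards [h2] with x hx
  have hI : ∫ y, ‖x - y‖ ^ (-α) * Real.sqrt (1 + ‖y‖ ^ 2) ^ (-β / 2) * ‖φ y‖ ≤
      C * (K * Real.sqrt (1 + ‖x‖ ^ 2) ^ (-t)) := by
    calc _ ≤ ∫ y, C * (‖x - y‖ ^ (-α) * Real.sqrt (1 + ‖y‖ ^ 2) ^ (-(β + s))) := by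
          refine integral_mono_of_nonneg (Filter.Eventually.of_forall fun y => ?_)
            ((hdecay x).1.const_mul _) ?_
          · show 0 ≤ _
            positivity
          · filter_upwards [h1] with y hy
            have e : Real.sqrt (1 + ‖y‖ ^ 2) ^ (-(β + s)) =
                Real.sqrt (1 + ‖y‖ ^ 2) ^ (-β / 2) * Real.sqrt (1 + ‖y‖ ^ 2) ^ (-β / 2 - s) := by
              rw [← Real.rpow_add (bracket_pos y)]; congr 1; ring
            calc _ ≤ ‖x - y‖ ^ (-α) * Real.sqrt (1 + ‖y‖ ^ 2) ^ (-β / 2) *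
                  (C * Real.sqrt (1 + ‖y‖ ^ 2) ^ (-β / 2 - s)) := by gcongr
              _ = _ := by rw [e]; ring
      _ ≤ _ := by
          rw [integral_const_mul]
          gcongr
          exact (hdecay x).2
  calc ‖φ x‖ ≤ _ := hx
    _ ≤ C₂ * Real.sqrt (1 + ‖x‖ ^ 2) ^ (-β / 2) *
        (C * (K * Real.sqrt (1 + ‖x‖ ^ 2) ^ (-t))) := by gcongr
    _ = _ := by
      rw [sub_eq_add_neg, Real.rpow_add (bracket_pos x)]; ring

/-- Decay estimate for threshold eigenfunctions: if `φ` satisfies the pointwise bound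
`|φ(x)| ≤ C₁⟨x⟩^{-β/2}` and the integral inequality
`|φ(x)| ≤ C₂⟨x⟩^{-β/2} ∫ |x−y|^{2m−n}⟨y⟩^{-β/2}|φ(y)| dy`, then
`|φ(x)| ≤ C⟨x⟩^{2m−n−β/2}` a.e. -/
theorem stmt_0 (n m : ℕ) (hm : 1 ≤ m) (hn : 2 * m < n) (β : ℝ) (hβ : 2 * (m : ℝ) < β)
    (C₁ C₂ : ℝ) (hC₁ : 0 < C₁) (hC₂ : 0 < C₂) :
    ∃ C > (0 : ℝ), ∀ φ : EuclideanSpace ℝ (Fin n) → ℂ, Measurable φ →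
      (∀ᵐ x ∂(volume : Measure (EuclideanSpace ℝ (Fin n))),
        ‖φ x‖ ≤ C₁ * Real.sqrt (1 + ‖x‖ ^ 2) ^ (-β / 2)) →
      (∀ᵐ x ∂(volume : Measure (EuclideanSpace ℝ (Fin n))),
        ‖φ x‖ ≤ C₂ * Real.sqrt (1 + ‖x‖ ^ 2) ^ (-β / 2) *
          ∫ y, ‖x - y‖ ^ (2 * (m : ℝ) - n) * Real.sqrt (1 + ‖y‖ ^ 2) ^ (-β / 2) * ‖φ y‖) →
      ∀ᵐ x ∂(volume : Measure (EuclideanSpace ℝ (Fin n))),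
        ‖φ x‖ ≤ C * Real.sqrt (1 + ‖x‖ ^ 2) ^ (2 * (m : ℝ) - n - β / 2) := by
  have hm' : (1 : ℝ) ≤ m := by exact_mod_cast hm
  have hn' : 2 * (m : ℝ) < n := by exact_mod_cast hn
  have hn0 : 0 < n := by omega
  set α : ℝ := n - 2 * m with hα
  have eα : 2 * (m : ℝ) - n = -α := by rw [hα]; ring
  rw [eα]
  have hε : 0 < (β - 2 * m) / 2 := by linarith
  have key : ∀ k : ℕ, ∃ C > (0 : ℝ), ∀ φ : EuclideanSpace ℝ (Fin n) → ℂ,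
      (∀ᵐ x, ‖φ x‖ ≤ C₁ * Real.sqrt (1 + ‖x‖ ^ 2) ^ (-β / 2)) →
      (∀ᵐ x, ‖φ x‖ ≤ C₂ * Real.sqrt (1 + ‖x‖ ^ 2) ^ (-β / 2) *
          ∫ y, ‖x - y‖ ^ (-α) * Real.sqrt (1 + ‖y‖ ^ 2) ^ (-β / 2) * ‖φ y‖) →
      ∀ᵐ x, ‖φ x‖ ≤ C * Real.sqrt (1 + ‖x‖ ^ 2) ^
        (-β / 2 - min α (k * ((β - 2 * m) / 2))) := by
    intro k
    induction k with
    | zero =>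
      refine ⟨C₁, hC₁, fun φ h1 _ => ?_⟩
      have : min α (((0 : ℕ) : ℝ) * ((β - 2 * m) / 2)) = 0 := by
        rw [Nat.cast_zero, zero_mul, min_eq_right (by linarith)]
      rw [this, sub_zero]
      exact h1
    | succ k ih =>
      obtain ⟨C, hC, ihC⟩ := ih
      have hstep : min α (((k + 1 : ℕ) : ℝ) * ((β - 2 * m) / 2)) <
          min α (k * ((β - 2 * m) / 2)) + (β - (n - α)) := by
        have e : β - (n - α) = 2 * ((β - 2 * m) / 2) := by rw [hα]; ring
        rw [e]
        push_cast
        rcases le_total α (k * ((β - 2 * m) / 2)) with h | h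
        · rw [min_eq_left h]
          exact (min_le_left _ _).trans_lt (by linarith)
        · rw [min_eq_right h]
          exact (min_le_right _ _).trans_lt (by linarith)
      obtain ⟨D, hD, hDφ⟩ := decay_step hn0 hC₂ hC
        (le_min (by linarith) (by positivity)) (min_le_left _ _) (by linarith) hstep
      exact ⟨D, hD, fun φ h1 h2 => hDφ φ (ihC φ h1 h2) h2⟩
  obtain ⟨k, hk⟩ := exists_nat_ge (α / ((β - 2 * m) / 2))
  rw [div_le_iff₀ hε] at hk
  obtain ⟨C, hC, h⟩ := key k
  refine ⟨C, hC, fun φ _ h1 h2 => ?_⟩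
  have := h φ h1 h2
  rw [min_eq_left hk] at this
  rwa [show -α - β / 2 = -β / 2 - α by ring]
end

section
/- Let n > 2m ≥ 2 be integers and let γ > n be real. Then there is a constant C (depending on n, m, γ) such that for every x ∈ ℝⁿ, ∫_{ℝⁿ} ⟨y⟩^{-γ} |x−y|^{2m−n} dy ≤ C ⟨x⟩^{2m−n}. -/
/-!
Write `⟨x⟩ = √(1 + ‖x‖²)`, `s = 2m - n ∈ (-n, 0)` and `ρ = ⟨x⟩ / 2 ≥ 1/2`; split the integral
at `‖x - y‖ = ρ`.

* Where `‖x - y‖ ≥ ρ`, the kernel is at most `ρ ^ s`, and `⟨y⟩ ^ (-γ)` is integrable as `γ > n`.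
* Where `‖x - y‖ < ρ`, the inequality `⟨x⟩ ≤ ⟨y⟩ + ‖x - y‖` gives `⟨y⟩ ≥ ρ`, so the weight is at
  most `ρ ^ (-γ)`. By scaling, the kernel integrates to `ρ ^ (s + n)` times its integral over the
  unit ball, which is finite as `s > -n`. The product is a multiple of `ρ ^ s * ρ ^ (n - γ)`, and
  `ρ ^ (n - γ)` is bounded since `ρ ≥ 1/2` and `γ > n`.

Both regions are handled at once by the integrable majorant of `integrand_le_majorant`.
-/

open MeasureTheory

section

variable {E : Type*} [NormedAddCommGroup E]

lemma sqrt_one_add_norm_sq_le_add_norm_sub (x y : E) :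
    √(1 + ‖x‖ ^ 2) ≤ √(1 + ‖y‖ ^ 2) + ‖x - y‖ := by
  have hxy : ‖x‖ ≤ ‖y‖ + ‖x - y‖ := by
    simpa using norm_add_le y (x - y)
  have hy : ‖y‖ ≤ √(1 + ‖y‖ ^ 2) := Real.le_sqrt_of_sq_le (by linarith)
  have hs : √(1 + ‖y‖ ^ 2) ^ 2 = 1 + ‖y‖ ^ 2 := Real.sq_sqrt (by positivity)
  refine Real.sqrt_le_iff.2 ⟨by positivity, ?_⟩
  nlinarith [norm_nonneg x, norm_nonneg y, norm_nonneg (x - y),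
    mul_le_mul_of_nonneg_right hy (norm_nonneg (x - y))]

/-- The power `‖z‖ ^ s` cut off to the open unit ball. -/
noncomputable def truncatedKernel (s : ℝ) : E → ℝ :=
  (Metric.ball (0 : E) 1).indicator fun z => ‖z‖ ^ s

lemma truncatedKernel_nonneg (s : ℝ) (z : E) : 0 ≤ truncatedKernel s z :=
  Set.indicator_nonneg (fun _ _ => by positivity) z

variable [NormedSpace ℝ E]

lemma truncatedKernel_smul_of_lt {s ρ : ℝ} (hρ : 0 < ρ) {z : E} (hz : ‖z‖ < ρ) :
    ρ ^ s * truncatedKernel s (ρ⁻¹ • z) = ‖z‖ ^ s := by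
  have hn : ‖ρ⁻¹ • z‖ = ρ⁻¹ * ‖z‖ := by
    rw [norm_smul, Real.norm_of_nonneg (by positivity)]
  have hmem : ρ⁻¹ • z ∈ Metric.ball (0 : E) 1 := by
    rw [mem_ball_zero_iff, hn, inv_mul_lt_one₀ hρ]
    exact hz
  rw [truncatedKernel, Set.indicator_of_mem hmem, hn,
    ← Real.mul_rpow hρ.le (by positivity), mul_inv_cancel_left₀ (ne_of_gt hρ)]

/-- The first summand dominates where `‖x - y‖ ≥ ⟨x⟩ / 2`, the second where
`‖x - y‖ < ⟨x⟩ / 2`. -/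
lemma integrand_le_majorant {s γ : ℝ} (hs : s ≤ 0) (hγ : 0 ≤ γ) (x y : E) {ρ : ℝ}
    (hρ : ρ = √(1 + ‖x‖ ^ 2) / 2) :
    √(1 + ‖y‖ ^ 2) ^ (-γ) * ‖x - y‖ ^ s ≤
      ρ ^ s * √(1 + ‖y‖ ^ 2) ^ (-γ) +
        ρ ^ (-γ) * ρ ^ s * truncatedKernel s (ρ⁻¹ • (x - y)) := by
  have hρ0 : 0 < ρ := by rw [hρ]; positivity
  have hK := truncatedKernel_nonneg s (ρ⁻¹ • (x - y))
  rcases le_or_gt ρ ‖x - y‖ with h | h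
  · have h1 : ‖x - y‖ ^ s ≤ ρ ^ s := Real.rpow_le_rpow_of_nonpos hρ0 h hs
    have h2 : 0 ≤ ρ ^ (-γ) * ρ ^ s * truncatedKernel s (ρ⁻¹ • (x - y)) := by positivity
    have h3 : √(1 + ‖y‖ ^ 2) ^ (-γ) * ‖x - y‖ ^ s ≤ √(1 + ‖y‖ ^ 2) ^ (-γ) * ρ ^ s := by
      gcongr
    linarith
  · have hy : ρ ≤ √(1 + ‖y‖ ^ 2) := by
      linarith [sqrt_one_add_norm_sq_le_add_norm_sub x y]
    have h1 : √(1 + ‖y‖ ^ 2) ^ (-γ) ≤ ρ ^ (-γ) :=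
      Real.rpow_le_rpow_of_nonpos hρ0 hy (by linarith)
    have h2 : 0 ≤ ρ ^ s * √(1 + ‖y‖ ^ 2) ^ (-γ) := by positivity
    rw [mul_assoc, truncatedKernel_smul_of_lt hρ0 h]
    have h3 : √(1 + ‖y‖ ^ 2) ^ (-γ) * ‖x - y‖ ^ s ≤ ρ ^ (-γ) * ‖x - y‖ ^ s := by
      gcongr
    linarith

variable [FiniteDimensional ℝ E] [MeasurableSpace E] [BorelSpace E]
  (μ : Measure E) [μ.IsAddHaarMeasure]

lemma integrable_truncatedKernel (hd : 1 ≤ Module.finrank ℝ E) {s : ℝ}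
    (hs : -s < Module.finrank ℝ E) : Integrable (truncatedKernel s) μ := by
  refine (integrable_indicator_iff measurableSet_ball).2 ?_
  refine integrableOn_ball_of_norm_le_rpow (C := 1) hd hs (.of_forall fun z => ?_)
    (Measurable.aestronglyMeasurable (by fun_prop))
  rw [neg_neg, one_mul, Real.norm_of_nonneg (by positivity)]

lemma integrable_sqrt_one_add_norm_sq_rpow {γ : ℝ} (hγ : Module.finrank ℝ E < γ) :
    Integrable (fun y => √(1 + ‖y‖ ^ 2) ^ (-γ)) μ := by
  refine (integrable_rpow_neg_one_add_norm_sq hγ).congr (.of_forall fun y => ?_)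
  simp only
  rw [Real.sqrt_eq_rpow, ← Real.rpow_mul (by positivity)]
  congr 1
  ring

end

/-- For `γ > n`, `∫ ⟨y⟩^{-γ} |x−y|^{2m−n} dy ≤ C ⟨x⟩^{2m−n}`. -/
theorem stmt_2 (n m : ℕ) (hm : 1 ≤ m) (hn : 2 * m < n) (γ : ℝ) (hγ : (n : ℝ) < γ) :
    ∃ C > (0 : ℝ), ∀ x : EuclideanSpace ℝ (Fin n),
      ∫ y, Real.sqrt (1 + ‖y‖ ^ 2) ^ (-γ) * ‖x - y‖ ^ (2 * (m : ℝ) - n)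
        ≤ C * Real.sqrt (1 + ‖x‖ ^ 2) ^ (2 * (m : ℝ) - n) := by
  have hm' : (1 : ℝ) ≤ m := by exact_mod_cast hm
  have hn' : 2 * (m : ℝ) < n := by exact_mod_cast hn
  have hdim : Module.finrank ℝ (EuclideanSpace ℝ (Fin n)) = n := by simp
  set s : ℝ := 2 * (m : ℝ) - n with hs
  have hI := integrable_sqrt_one_add_norm_sq_rpow
    (volume : Measure (EuclideanSpace ℝ (Fin n))) (γ := γ) (by rwa [hdim])
  have hK := integrable_truncatedKernel (volume : Measure (EuclideanSpace ℝ (Fin n)))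
    (s := s) (by omega) (by rw [hdim]; linarith)
  set I := ∫ y : EuclideanSpace ℝ (Fin n), √(1 + ‖y‖ ^ 2) ^ (-γ) with hIdef
  set K := ∫ z : EuclideanSpace ℝ (Fin n), truncatedKernel s z with hKdef
  have hI0 : 0 ≤ I := integral_nonneg fun y => by positivity
  have hK0 : 0 ≤ K := integral_nonneg fun z => truncatedKernel_nonneg s z
  -- The summand `1` only serves to make the constant positive.
  refine ⟨(I + (1 / 2) ^ ((n : ℝ) - γ) * K) / 2 ^ s + 1, by positivity, fun x => ?_⟩
  set R := √(1 + ‖x‖ ^ 2) with hR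
  have hR1 : 1 ≤ R := Real.one_le_sqrt.2 (by nlinarith [norm_nonneg x])
  obtain ⟨ρ, hρ⟩ : ∃ ρ, ρ = R / 2 := ⟨_, rfl⟩
  have hρ0 : 0 < ρ := by linarith
  have hg := ((hK.comp_smul (inv_ne_zero hρ0.ne')).comp_sub_left x).const_mul
    (ρ ^ (-γ) * ρ ^ s)
  calc ∫ y, √(1 + ‖y‖ ^ 2) ^ (-γ) * ‖x - y‖ ^ s
      ≤ ∫ y, (ρ ^ s * √(1 + ‖y‖ ^ 2) ^ (-γ) +
          ρ ^ (-γ) * ρ ^ s * truncatedKernel s (ρ⁻¹ • (x - y))) :=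
        integral_mono_of_nonneg (.of_forall fun y => by positivity)
          ((hI.const_mul (ρ ^ s)).add hg) (.of_forall fun y =>
            integrand_le_majorant (by linarith) (by linarith) x y hρ)
    _ = ρ ^ s * I + ρ ^ (-γ) * ρ ^ s * (ρ ^ n * K) := by
        rw [integral_add (hI.const_mul _) hg, integral_const_mul, integral_const_mul,
          integral_sub_left_eq_self (fun z => truncatedKernel s (ρ⁻¹ • z)) volume x,
          Measure.integral_comp_inv_smul_of_nonneg _ _ hρ0.le, hdim, smul_eq_mul]
    _ = ρ ^ s * (I + ρ ^ ((n : ℝ) - γ) * K) := by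
        rw [sub_eq_add_neg (n : ℝ) γ, Real.rpow_add hρ0, Real.rpow_natCast]
        ring
    _ ≤ ρ ^ s * (I + (1 / 2) ^ ((n : ℝ) - γ) * K) := by
        have : ρ ^ ((n : ℝ) - γ) ≤ (1 / 2) ^ ((n : ℝ) - γ) :=
          Real.rpow_le_rpow_of_nonpos (by norm_num) (by linarith) (by linarith)
        gcongr
    _ = (I + (1 / 2) ^ ((n : ℝ) - γ) * K) / 2 ^ s * R ^ s := by
        rw [hρ, Real.div_rpow (by linarith) (by norm_num)]
        ring
    _ ≤ ((I + (1 / 2) ^ ((n : ℝ) - γ) * K) / 2 ^ s + 1) * R ^ s := by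
        gcongr
        linarith
end

section
/- Let n > 2m ≥ 2 be integers, let k₂ be an integer with 1 ≤ k₂ ≤ n, let 0 < ε < k₂, and let β > 2m + k₂. Suppose f : ℝⁿ → ℂ is measurable, |f(y)| ≤ C₀⟨y⟩^{2m−n−β} for almost every y, and ∫_{ℝⁿ} y^α f(y) dy = 0 for every multi-index α with |α| ≤ k₂ − 1. Then the function φ(x) := ∫_{ℝⁿ} |x−y|^{k₂−ε−n} f(y) dy satisfies |φ(x)| ≤ C ⟨x⟩^{-n−ε} for all x ∈ ℝⁿ, with C depending only on n, m, k₂, ε, β, C₀. -/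
open MeasureTheory

/-!
Write `a = n - k₂ + ε ∈ (0, n)` and `s = n + β - 2m > n + k₂`, so that the kernel is `|x - y|^(-a)`,
`|f| ≤ C₀ ⟨y⟩^(-s)` and the claimed decay is `⟨x⟩^(-a - k₂)`.

For `|x| ≤ 1` the integral is bounded because `|z|^(-a)` is locally integrable and `f` is integrable.
For `|x| ≥ 1` the vanishing moments allow the degree `k₂ - 1` Taylor polynomial `P_x(y)` of
`y ↦ |x - y|^(-a)` to be subtracted from the kernel. The kernel is homogeneous and rotation
invariant, so its expansion at one unit vector gives, uniformly in `x` (`kernel_taylor`), a remainder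
`O(|x|^(-a - k₂) |y|^k₂)` on `|y| < δ|x|`; on `|y| ≥ δ|x|` the polynomial itself obeys that bound.
Since `|y|^k₂ ⟨y⟩^(-s)` is integrable, these terms contribute `O(|x|^(-a - k₂))`.
What remains is the kernel on `|y| ≥ δ|x|`. Where `|x - y| ≥ |x|` it is at most `|x|^(-a)`, which is
again `O(|x|^(-a - k₂) |y|^k₂)`; where `|x - y| < |x|` the weight is `O(|x|^(-s))` and the kernel has
integral `O(|x|^(n - a))`. The two regions are combined in `remainder_bound`.
-/

theorem integrable_local_kernel (n : ℕ) (hn : 1 ≤ n) (a : ℝ) (ha : a < n) :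
    Integrable (fun z : EuclideanSpace ℝ (Fin n) => if ‖z‖ < 1 then ‖z‖ ^ (-a) else 0) := by
  have : Nonempty (Fin n) := ⟨⟨0, hn⟩⟩
  have key := integrable_fun_norm_addHaar (E := EuclideanSpace ℝ (Fin n)) volume
    (f := fun t : ℝ => if t < 1 then t ^ (-a) else 0)
  refine key.2 ?_
  have h1 : IntegrableOn (fun t : ℝ => t ^ ((n : ℝ) - 1 - a)) (Set.Ioo 0 1) :=
    (intervalIntegral.integrableOn_Ioo_rpow_iff one_pos).2 (by linarith)
  have h2 := (integrable_indicator_iff measurableSet_Ioo).2 h1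
  refine h2.integrableOn.congr_fun ?_ measurableSet_Ioi (s := Set.Ioi 0)
  intro t ht
  have ht : 0 < t := ht
  by_cases h : t < 1
  · have : t ∈ Set.Ioo (0 : ℝ) 1 := ⟨ht, h⟩
    simp only [Set.indicator_of_mem this, h, if_true, finrank_euclideanSpace, Fintype.card_fin,
      smul_eq_mul]
    rw [← Real.rpow_natCast, ← Real.rpow_add ht]
    congr 1
    push_cast [Nat.cast_sub hn]
    ring
  · simp [h]

theorem integrable_bracket (n : ℕ) (t : ℝ) (ht : n < t) :
    Integrable (fun y : EuclideanSpace ℝ (Fin n) => Real.sqrt (1 + ‖y‖ ^ 2) ^ (-t)) := by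
  have := integrable_rpow_neg_one_add_norm_sq (E := EuclideanSpace ℝ (Fin n)) (μ := volume)
    (r := t) (by simpa using ht)
  convert this using 2 with y
  rw [Real.sqrt_eq_rpow, ← Real.rpow_mul (by positivity)]
  congr 1
  ring

/-- Vanishing of the monomial moments of order less than `k` implies vanishing of the integral of `f`
against every homogeneous polynomial of degree `i < k`, presented as the diagonal of a multilinear
form. -/
theorem integral_multilinear_eq_zero (n k : ℕ) (f : EuclideanSpace ℝ (Fin n) → ℂ)
    (hmom : ∀ α : Fin n → ℕ, (∑ i, α i) < k →
        ∫ y, ((∏ i, (y i) ^ (α i) : ℝ) : ℂ) * f y = 0)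
    (hint : ∀ i < k, ∀ r : Fin i → Fin n,
      Integrable fun y : EuclideanSpace ℝ (Fin n) => ((∏ j, y (r j) : ℝ) : ℂ) * f y)
    (i : ℕ) (hi : i < k)
    (M : ContinuousMultilinearMap ℝ (fun _ : Fin i => EuclideanSpace ℝ (Fin n)) ℝ) :
    Integrable (fun y => ((M fun _ => y : ℝ) : ℂ) * f y) ∧
      ∫ y, ((M fun _ => y : ℝ) : ℂ) * f y = 0 := by
  have hM : ∀ y : EuclideanSpace ℝ (Fin n), ((M fun _ => y : ℝ) : ℂ) * f y =
      ∑ r : Fin i → Fin n, ((M fun j => EuclideanSpace.single (r j) 1 : ℝ) : ℂ) *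
        (((∏ j, y (r j) : ℝ) : ℂ) * f y) := by
    intro y
    have hy : y = ∑ l, y l • EuclideanSpace.single l (1 : ℝ) := by
      ext l
      simp [Finset.sum_apply, Pi.single_apply]
    have : (M fun _ => y) = ∑ r : Fin i → Fin n,
        (∏ j, y (r j)) * (M fun j => EuclideanSpace.single (r j) 1) := by
      conv_lhs => rw [hy]
      rw [M.map_sum]
      refine Finset.sum_congr rfl fun r _ => ?_
      rw [M.map_smul_univ, smul_eq_mul]
    rw [this]
    push_cast
    rw [Finset.sum_mul]
    exact Finset.sum_congr rfl fun r _ => by ring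
  simp_rw [hM]
  have hI : ∀ r : Fin i → Fin n, Integrable fun y : EuclideanSpace ℝ (Fin n) =>
      ((M fun j => EuclideanSpace.single (r j) 1 : ℝ) : ℂ) *
        (((∏ j, y (r j) : ℝ) : ℂ) * f y) := fun r => (hint i hi r).const_mul _
  refine ⟨integrable_finsetSum _ fun r _ => hI r, ?_⟩
  rw [integral_finsetSum _ fun r _ => hI r]
  refine Finset.sum_eq_zero fun r _ => ?_
  rw [integral_const_mul]
  have h0 := hmom (fun l => (Finset.univ.filter fun j => r j = l).card) (by
    rw [← Finset.card_eq_sum_card_fiberwise (f := r) (fun _ _ => by simp)]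
    simpa using hi)
  have : ∀ y : EuclideanSpace ℝ (Fin n),
      ∏ l, y l ^ (Finset.univ.filter fun j => r j = l).card = ∏ j, y (r j) := by
    intro y
    rw [← Finset.prod_fiberwise' Finset.univ r (fun l => y l)]
    simp
  simp_rw [this] at h0
  rw [h0, mul_zero]

/-- Taylor expansion of `y ↦ |x - y|^(-a)` at `y = 0`, uniformly in `x ≠ 0`. The function
`z ↦ |z|^(-a)` is expanded at a single unit vector `e`; a reflection taking `x` to `|x| e` and a
dilation by `|x|` transport the expansion to every `x`. -/
theorem kernel_taylor (n : ℕ) (hn : 1 ≤ n) (a : ℝ) (k : ℕ) :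
    ∃ δ > (0 : ℝ), ∃ C ≥ (0 : ℝ), ∀ x : EuclideanSpace ℝ (Fin n), x ≠ 0 →
      ∃ p : FormalMultilinearSeries ℝ (EuclideanSpace ℝ (Fin n)) ℝ,
        (∀ y, ‖y‖ < δ * ‖x‖ →
          |‖x - y‖ ^ (-a) - p.partialSum k y| ≤ C * ‖x‖ ^ (-a - k) * ‖y‖ ^ k) ∧
        (∀ y, δ * ‖x‖ ≤ ‖y‖ → |p.partialSum k y| ≤ C * ‖x‖ ^ (-a - k) * ‖y‖ ^ k) := by
  set e : EuclideanSpace ℝ (Fin n) := EuclideanSpace.single ⟨0, hn⟩ 1 with he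
  have he1 : ‖e‖ = 1 := by simp [he]
  have he0 : e ≠ 0 := by rw [← norm_ne_zero_iff, he1]; exact one_ne_zero
  have hcd : ContDiffAt ℝ ⊤ (fun z : EuclideanSpace ℝ (Fin n) => ‖z‖ ^ (-a)) e :=
    (contDiffAt_norm ℝ he0).rpow_const_of_ne (by rw [he1]; exact one_ne_zero)
  obtain ⟨q, hq⟩ : AnalyticAt ℝ (fun z : EuclideanSpace ℝ (Fin n) => ‖z‖ ^ (-a)) e :=
    hcd.analyticAt
  obtain ⟨C₁, hC₁, hO⟩ := (hq.isBigO_sub_partialSum_pow k).exists_pos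
  obtain ⟨δ, hδ, hδb⟩ := Metric.eventually_nhds_iff.1 hO.bound
  have hpoly : ∃ C₂ ≥ (0 : ℝ), ∀ v, δ ≤ ‖v‖ → |q.partialSum k v| ≤ C₂ * ‖v‖ ^ k := by
    refine ⟨∑ i ∈ Finset.range k, ‖q i‖ * δ⁻¹ ^ (k - i), by positivity, fun v hv => ?_⟩
    rw [FormalMultilinearSeries.partialSum, Finset.sum_mul]
    refine (Finset.abs_sum_le_sum_abs _ _).trans (Finset.sum_le_sum fun i hi => ?_)
    have hi : i < k := Finset.mem_range.1 hi
    have h1 : |q i fun _ => v| ≤ ‖q i‖ * ‖v‖ ^ i := by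
      simpa using (q i).le_opNorm fun _ => v
    have h2 : 1 ≤ (δ⁻¹ * ‖v‖) ^ (k - i) := by
      apply one_le_pow₀
      rw [inv_mul_eq_div, one_le_div hδ]
      exact hv
    calc |q i fun _ => v| ≤ ‖q i‖ * ‖v‖ ^ i := h1
      _ ≤ ‖q i‖ * ‖v‖ ^ i * (δ⁻¹ * ‖v‖) ^ (k - i) := le_mul_of_one_le_right (by positivity) h2
      _ = ‖q i‖ * δ⁻¹ ^ (k - i) * (‖v‖ ^ i * ‖v‖ ^ (k - i)) := by rw [mul_pow]; ring
      _ = ‖q i‖ * δ⁻¹ ^ (k - i) * ‖v‖ ^ k := by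
        rw [← pow_add, Nat.add_sub_cancel' hi.le]
  obtain ⟨C₂, hC₂, hpoly⟩ := hpoly
  refine ⟨δ, hδ, C₁ + C₂, by positivity, fun x hx => ?_⟩
  have hr : 0 < ‖x‖ := norm_pos_iff.2 hx
  set r := ‖x‖ with hrdef
  -- a reflection carrying `x` to the positive ray through `e`
  set R := Submodule.reflection (ℝ ∙ (x - r • e))ᗮ with hR
  have hRx : R x = r • e := Submodule.reflection_sub (by
    rw [norm_smul, he1, Real.norm_of_nonneg hr.le, mul_one])
  set L : EuclideanSpace ℝ (Fin n) →L[ℝ] EuclideanSpace ℝ (Fin n) :=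
    (-r⁻¹) • (R.toContinuousLinearEquiv : EuclideanSpace ℝ (Fin n) →L[ℝ] _) with hL
  have hLapp : ∀ y, L y = (-r⁻¹) • R y := fun y => rfl
  have hLn : ∀ y, ‖L y‖ = r⁻¹ * ‖y‖ := by
    intro y
    rw [hLapp, norm_smul, R.norm_map, norm_neg, norm_inv, Real.norm_of_nonneg hr.le]
  have hker : ∀ y, ‖x - y‖ = r * ‖e + L y‖ := by
    intro y
    rw [← R.norm_map, map_sub, hRx, hLapp, ← Real.norm_of_nonneg hr.le, ← norm_smul,
      Real.norm_of_nonneg hr.le, smul_add, smul_smul, mul_neg, mul_inv_cancel₀ hr.ne', neg_one_smul,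
      sub_eq_add_neg]
  have hscale : ∀ y, r ^ (-a) * ‖L y‖ ^ k = r ^ (-a - k) * ‖y‖ ^ k := by
    intro y
    rw [hLn, mul_pow, Real.rpow_sub hr, Real.rpow_natCast, inv_pow]
    field_simp
  have hra : 0 < r ^ (-a) := Real.rpow_pos_of_pos hr _
  refine ⟨fun i => r ^ (-a) • (q i).compContinuousLinearMap fun _ => L, ?_⟩
  have hps : ∀ y, FormalMultilinearSeries.partialSum
      (fun i => r ^ (-a) • (q i).compContinuousLinearMap fun _ => L) k y =
      r ^ (-a) * q.partialSum k (L y) := by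
    intro y
    simp only [FormalMultilinearSeries.partialSum, Finset.mul_sum]
    rfl
  have hnn : ∀ y, 0 ≤ r ^ (-a) * ‖L y‖ ^ k := fun y => by positivity
  constructor
  · intro y hy
    have hd : dist (L y) 0 < δ := by
      rw [dist_zero_right, hLn, inv_mul_lt_iff₀ hr, mul_comm]
      exact hy
    have := hδb hd
    simp only [Real.norm_eq_abs, abs_pow, abs_norm] at this
    rw [hps, hker, Real.mul_rpow hr.le (norm_nonneg _), ← mul_sub, abs_mul, abs_of_pos hra,
      mul_assoc, ← hscale]
    nlinarith [mul_le_mul_of_nonneg_left this hra.le, mul_nonneg hC₂ (hnn y)]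
  · intro y hy
    have hd : δ ≤ ‖L y‖ := by
      rw [hLn, inv_mul_eq_div, le_div_iff₀ hr]
      exact hy
    have := hpoly _ hd
    rw [hps, abs_mul, abs_of_pos hra, mul_assoc, ← hscale]
    nlinarith [mul_le_mul_of_nonneg_left this hra.le, mul_nonneg hC₁.le (hnn y)]

/-- At scale `r`, the kernel is at most its value `r^(-a)` on the sphere of radius `r` plus its
truncation to the ball of radius `r`. -/
theorem kernel_le_scaled (n : ℕ) (a : ℝ) (ha : 0 ≤ a) (r : ℝ) (hr : 0 < r)
    (z : EuclideanSpace ℝ (Fin n)) :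
    ‖z‖ ^ (-a) ≤ r ^ (-a) * ((if ‖r⁻¹ • z‖ < 1 then ‖r⁻¹ • z‖ ^ (-a) else 0) + 1) := by
  have hz : ‖z‖ = r * ‖r⁻¹ • z‖ := by
    rw [norm_smul, norm_inv, Real.norm_of_nonneg hr.le, mul_inv_cancel_left₀ hr.ne']
  rw [hz, Real.mul_rpow hr.le (norm_nonneg _)]
  refine mul_le_mul_of_nonneg_left ?_ (Real.rpow_nonneg hr.le _)
  split_ifs with h
  · linarith
  · rw [zero_add]
    exact Real.rpow_le_one_of_one_le_of_nonpos (not_lt.1 h) (by linarith)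

theorem bracket_weight_le (t : ℝ) (ht : 0 ≤ t) (s : ℝ) (i k : ℕ) (hi : i ≤ k) :
    t ^ i * Real.sqrt (1 + t ^ 2) ^ (-s) ≤ Real.sqrt (1 + t ^ 2) ^ (-(s - k)) := by
  have h1 : 1 ≤ Real.sqrt (1 + t ^ 2) := Real.one_le_sqrt.2 (by nlinarith)
  have h2 : t ≤ Real.sqrt (1 + t ^ 2) := Real.le_sqrt_of_sq_le (by linarith)
  have h0 : 0 < Real.sqrt (1 + t ^ 2) := by linarith
  have h3 : t ^ i ≤ Real.sqrt (1 + t ^ 2) ^ k :=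
    (pow_le_pow_left₀ ht h2 i).trans (pow_le_pow_right₀ h1 hi)
  calc t ^ i * Real.sqrt (1 + t ^ 2) ^ (-s)
      ≤ Real.sqrt (1 + t ^ 2) ^ k * Real.sqrt (1 + t ^ 2) ^ (-s) := by gcongr
    _ = Real.sqrt (1 + t ^ 2) ^ (-(s - k)) := by
        rw [← Real.rpow_natCast, ← Real.rpow_add h0]
        congr 1
        ring

/-- Pointwise bound on the weighted kernel minus its Taylor polynomial `P`, valid both near to and
far from the origin: an integrable weight with the coefficient `|x|^(-a - k)`, plus the truncated
kernel around `x` with the gain `|x|^(-s)` coming from the decay of the weight. -/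
theorem remainder_bound {n : ℕ} (a s δ C : ℝ) (k : ℕ) (ha : 0 ≤ a) (hs : 0 ≤ s) (hδ : 0 < δ) (hC : 0 ≤ C)
    (x y : EuclideanSpace ℝ (Fin n)) (hx : x ≠ 0) (P : ℝ)
    (hnear : ‖y‖ < δ * ‖x‖ → |‖x - y‖ ^ (-a) - P| ≤ C * ‖x‖ ^ (-a - k) * ‖y‖ ^ k)
    (hfar : δ * ‖x‖ ≤ ‖y‖ → |P| ≤ C * ‖x‖ ^ (-a - k) * ‖y‖ ^ k) :
    |‖x - y‖ ^ (-a) - P| * Real.sqrt (1 + ‖y‖ ^ 2) ^ (-s) ≤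
      (C + δ⁻¹ ^ k) * ‖x‖ ^ (-a - k) * Real.sqrt (1 + ‖y‖ ^ 2) ^ (-(s - k)) +
      δ ^ (-s) * ‖x‖ ^ (-a - s) *
        (if ‖‖x‖⁻¹ • (x - y)‖ < 1 then ‖‖x‖⁻¹ • (x - y)‖ ^ (-a) else 0) := by
  have hr : 0 < ‖x‖ := norm_pos_iff.2 hx
  have hker := kernel_le_scaled n a ha ‖x‖ hr (x - y)
  have hw := bracket_weight_le ‖y‖ (norm_nonneg y) s k k le_rfl
  set J := Real.sqrt (1 + ‖y‖ ^ 2) with hJ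
  have hJ0 : 0 < J := Real.sqrt_pos.2 (by positivity)
  have hJy : ‖y‖ ≤ J := Real.le_sqrt_of_sq_le (by linarith)
  have hJs : 0 < J ^ (-s) := Real.rpow_pos_of_pos hJ0 _
  set V := (if ‖‖x‖⁻¹ • (x - y)‖ < 1 then ‖‖x‖⁻¹ • (x - y)‖ ^ (-a) else 0) with hV
  have hV0 : 0 ≤ V := by
    rw [hV]; split_ifs
    · positivity
    · exact le_rfl
  set r := ‖x‖
  have hrak : 0 < r ^ (-a - k) := Real.rpow_pos_of_pos hr _
  have hra : 0 < r ^ (-a) := Real.rpow_pos_of_pos hr _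
  have hsecond : 0 ≤ δ ^ (-s) * r ^ (-a - s) * V := by positivity
  have hfirst : ∀ B : ℝ, 0 ≤ B →
      B * r ^ (-a - k) * ‖y‖ ^ k * J ^ (-s) ≤ B * r ^ (-a - k) * J ^ (-(s - k)) := by
    intro B hB
    rw [mul_assoc (B * r ^ (-a - k))]
    gcongr
  by_cases h : ‖y‖ < δ * r
  · have h1 := mul_le_mul_of_nonneg_right (hnear h) hJs.le
    have h2 := hfirst C hC
    have h3 : 0 ≤ δ⁻¹ ^ k * r ^ (-a - k) * J ^ (-(s - k)) := by positivity
    linarith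
  · have h := not_lt.1 h
    have hP := hfar h
    have hy : 1 ≤ (δ⁻¹ * r⁻¹ * ‖y‖) ^ k := by
      apply one_le_pow₀
      rw [← mul_inv, inv_mul_eq_div, one_le_div (by positivity)]
      exact h
    have e1 : r ^ (-a) ≤ δ⁻¹ ^ k * r ^ (-a - k) * ‖y‖ ^ k := by
      calc r ^ (-a) ≤ r ^ (-a) * (δ⁻¹ * r⁻¹ * ‖y‖) ^ k := le_mul_of_one_le_right hra.le hy
        _ = _ := by
          rw [Real.rpow_sub hr, Real.rpow_natCast, mul_pow, mul_pow, inv_pow r]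
          ring
    have e2 : J ^ (-s) ≤ δ ^ (-s) * r ^ (-s) := by
      rw [← Real.mul_rpow hδ.le hr.le]
      exact Real.rpow_le_rpow_of_nonpos (by positivity) (h.trans hJy) (by linarith)
    have e3 : r ^ (-a) * V * J ^ (-s) ≤ δ ^ (-s) * r ^ (-a - s) * V := by
      calc r ^ (-a) * V * J ^ (-s) ≤ r ^ (-a) * V * (δ ^ (-s) * r ^ (-s)) := by gcongr
        _ = _ := by rw [sub_eq_add_neg, Real.rpow_add hr]; ring
    have e4 : |‖x - y‖ ^ (-a) - P| ≤ r ^ (-a) * V + (C + δ⁻¹ ^ k) * r ^ (-a - k) * ‖y‖ ^ k := by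
      have : |‖x - y‖ ^ (-a) - P| ≤ |‖x - y‖ ^ (-a)| + |P| := abs_sub _ _
      rw [abs_of_nonneg (Real.rpow_nonneg (norm_nonneg _) _)] at this
      linarith
    have e5 := mul_le_mul_of_nonneg_right e4 hJs.le
    have e6 := hfirst (C + δ⁻¹ ^ k) (by positivity)
    linarith

/-- If `f` has decay `⟨y⟩^{2m−n−β}` and vanishing moments up to order `k₂−1`, then
`φ(x) = ∫ |x−y|^{k₂−ε−n} f(y) dy` satisfies `|φ(x)| ≤ C⟨x⟩^{-n−ε}`. -/
theorem stmt_3 (n m k₂ : ℕ) (hm : 1 ≤ m) (hn : 2 * m < n) (hk₂1 : 1 ≤ k₂) (hk₂2 : k₂ ≤ n)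
    (ε : ℝ) (hε1 : 0 < ε) (hε2 : ε < k₂) (β : ℝ) (hβ : 2 * (m : ℝ) + k₂ < β)
    (C₀ : ℝ) (hC₀ : 0 < C₀) :
    ∃ C > (0 : ℝ), ∀ f : EuclideanSpace ℝ (Fin n) → ℂ, Measurable f →
      (∀ᵐ y ∂(volume : Measure (EuclideanSpace ℝ (Fin n))),
        ‖f y‖ ≤ C₀ * Real.sqrt (1 + ‖y‖ ^ 2) ^ (2 * (m : ℝ) - n - β)) →
      (∀ α : Fin n → ℕ, (∑ i, α i) < k₂ →
        ∫ y, ((∏ i, (y i) ^ (α i) : ℝ) : ℂ) * f y = 0) →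
      ∀ x : EuclideanSpace ℝ (Fin n),
        ‖∫ y, ((‖x - y‖ ^ ((k₂ : ℝ) - ε - n) : ℝ) : ℂ) * f y‖ ≤
          C * Real.sqrt (1 + ‖x‖ ^ 2) ^ (-(n : ℝ) - ε) := by
  have hn1 : 1 ≤ n := by omega
  have hkn : (k₂ : ℝ) ≤ n := by exact_mod_cast hk₂2
  obtain ⟨a, hadef⟩ : ∃ a : ℝ, a = n - k₂ + ε := ⟨_, rfl⟩
  obtain ⟨s, hsdef⟩ : ∃ s : ℝ, s = n + β - 2 * m := ⟨_, rfl⟩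
  have ha0 : 0 ≤ a := by linarith
  have han : a < n := by linarith
  have hsk : (n : ℝ) < s - k₂ := by linarith
  have hn0 : (0 : ℝ) ≤ n := Nat.cast_nonneg n
  have hk0 : (0 : ℝ) ≤ k₂ := Nat.cast_nonneg k₂
  have hs0 : 0 ≤ s := by linarith
  rw [show 2 * (m : ℝ) - n - β = -s by rw [hsdef]; ring,
    show (k₂ : ℝ) - ε - n = -a by rw [hadef]; ring,
    show -(n : ℝ) - ε = -a - k₂ by rw [hadef]; ring]
  obtain ⟨δ, hδ, C₁, hC₁, htaylor⟩ := kernel_taylor n hn1 a k₂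
  have hVint := integrable_local_kernel n hn1 a han
  have hJint := integrable_bracket n (s - k₂) hsk
  set V : EuclideanSpace ℝ (Fin n) → ℝ := fun z => if ‖z‖ < 1 then ‖z‖ ^ (-a) else 0 with hV
  have hV0 : ∀ z, 0 ≤ V z := by
    intro z
    simp only [hV]
    split_ifs
    · positivity
    · exact le_rfl
  set D := ∫ y : EuclideanSpace ℝ (Fin n), Real.sqrt (1 + ‖y‖ ^ 2) ^ (-(s - k₂)) with hD
  set I := ∫ z, V z with hI
  have hD0 : 0 ≤ D := integral_nonneg fun y => by positivity
  have hI0 : 0 ≤ I := integral_nonneg hV0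
  have hVr : ∀ r : ℝ, 0 < r → ∀ x : EuclideanSpace ℝ (Fin n),
      Integrable (fun y => V (r⁻¹ • (x - y))) ∧ ∫ y, V (r⁻¹ • (x - y)) = r ^ n * I := by
    intro r hr x
    refine ⟨(hVint.comp_smul (inv_ne_zero hr.ne')).comp_sub_left x, ?_⟩
    rw [integral_sub_left_eq_self (fun z => V (r⁻¹ • z)) volume x,
      Measure.integral_comp_inv_smul_of_nonneg _ _ hr.le]
    simp [hI]
  set B₁ := C₁ + δ⁻¹ ^ k₂ with hB₁
  set B₂ := δ ^ (-s) with hB₂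
  have hB₁0 : 0 ≤ B₁ := by positivity
  have hB₂0 : 0 ≤ B₂ := by positivity
  have h2 : (0 : ℝ) < Real.sqrt 2 ^ (a + k₂) := Real.rpow_pos_of_pos (by positivity) _
  set A := C₀ * (B₁ * D + B₂ * I + I + D + 1) with hA
  have hA0 : 0 < A := by positivity
  refine ⟨A * Real.sqrt 2 ^ (a + k₂), by positivity, ?_⟩
  clear_value A B₁ B₂
  intro f hf hfb hmom x
  -- the integrand is dominated near the singularity by `V`, elsewhere by the weight
  have hKdom : ∀ᵐ y, ‖((‖x - y‖ ^ (-a) : ℝ) : ℂ) * f y‖ ≤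
      C₀ * (V ((1 : ℝ)⁻¹ • (x - y)) + Real.sqrt (1 + ‖y‖ ^ 2) ^ (-(s - k₂))) := by
    filter_upwards [hfb] with y hy
    have h1 := kernel_le_scaled n a ha0 1 one_pos (x - y)
    rw [Real.one_rpow, one_mul] at h1
    have h1 : ‖x - y‖ ^ (-a) ≤ V ((1 : ℝ)⁻¹ • (x - y)) + 1 := h1
    have h3 := bracket_weight_le ‖y‖ (norm_nonneg y) s 0 k₂ (Nat.zero_le _)
    rw [pow_zero, one_mul] at h3
    have h4 : Real.sqrt (1 + ‖y‖ ^ 2) ^ (-s) ≤ 1 :=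
      Real.rpow_le_one_of_one_le_of_nonpos (Real.one_le_sqrt.2 (by nlinarith [norm_nonneg y]))
        (by linarith)
    have h5 := hV0 ((1 : ℝ)⁻¹ • (x - y))
    rw [norm_mul, Complex.norm_real, Real.norm_of_nonneg (Real.rpow_nonneg (norm_nonneg _) _)]
    calc ‖x - y‖ ^ (-a) * ‖f y‖
        ≤ (V ((1 : ℝ)⁻¹ • (x - y)) + 1) * (C₀ * Real.sqrt (1 + ‖y‖ ^ 2) ^ (-s)) := by gcongr
      _ = C₀ * (V ((1 : ℝ)⁻¹ • (x - y)) * Real.sqrt (1 + ‖y‖ ^ 2) ^ (-s)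
            + Real.sqrt (1 + ‖y‖ ^ 2) ^ (-s)) := by ring
      _ ≤ _ := by
        gcongr
        exact mul_le_of_le_one_right h5 h4
  have hdomint : Integrable fun y =>
      C₀ * (V ((1 : ℝ)⁻¹ • (x - y)) + Real.sqrt (1 + ‖y‖ ^ 2) ^ (-(s - k₂))) :=
    (((hVr 1 one_pos x).1).add hJint).const_mul _
  have hKint : Integrable fun y => ((‖x - y‖ ^ (-a) : ℝ) : ℂ) * f y :=
    hdomint.mono' (by fun_prop) hKdom
  -- both `c = 1` (for `|x| ≤ 1`) and `c = |x|` (for `|x| ≥ 1`) satisfy `⟨x⟩ ≤ √2 c`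
  have hbr : ∀ c : ℝ, 0 < c → Real.sqrt (1 + ‖x‖ ^ 2) ≤ Real.sqrt 2 * c →
      c ^ (-a - k₂) ≤ Real.sqrt 2 ^ (a + k₂) * Real.sqrt (1 + ‖x‖ ^ 2) ^ (-a - k₂) := by
    intro c hc h
    have h1 := Real.rpow_le_rpow_of_nonpos (Real.sqrt_pos.2 (by positivity)) h
      (show -a - k₂ ≤ 0 by linarith)
    rw [Real.mul_rpow (by positivity) hc.le] at h1
    calc c ^ (-a - k₂)
        = Real.sqrt 2 ^ (a + k₂) * (Real.sqrt 2 ^ (-a - k₂) * c ^ (-a - k₂)) := by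
          rw [← mul_assoc, ← Real.rpow_add (by positivity)]
          simp
      _ ≤ _ := by gcongr
  rcases le_total ‖x‖ 1 with hx1 | hx1
  · have h1 := norm_integral_le_of_norm_le hdomint hKdom
    rw [integral_const_mul, integral_add (hVr 1 one_pos x).1 hJint, (hVr 1 one_pos x).2,
      one_pow, one_mul, ← hD] at h1
    have h3 := hbr 1 one_pos (by
      rw [mul_one]
      exact Real.sqrt_le_sqrt (by nlinarith [norm_nonneg x]))
    rw [Real.one_rpow] at h3
    have h4 : C₀ * (I + D) ≤ A := by
      rw [hA]
      refine mul_le_mul_of_nonneg_left ?_ hC₀.le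
      linarith [mul_nonneg hB₁0 hD0, mul_nonneg hB₂0 hI0]
    rw [mul_assoc]
    calc _ ≤ A * 1 := by linarith
      _ ≤ _ := by gcongr
  · have hr : 0 < ‖x‖ := by linarith
    have hx : x ≠ 0 := norm_pos_iff.1 hr
    obtain ⟨p, hnear, hfar⟩ := htaylor x hx
    have hmono : ∀ i < k₂, ∀ r : Fin i → Fin n,
        Integrable fun y : EuclideanSpace ℝ (Fin n) => ((∏ j, y (r j) : ℝ) : ℂ) * f y := by
      intro i hi r
      refine (hJint.const_mul C₀).mono' (by fun_prop) ?_
      filter_upwards [hfb] with y hy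
      rw [norm_mul, Complex.norm_real, norm_prod]
      have h1 : ∏ j, ‖y (r j)‖ ≤ ‖y‖ ^ i := by
        calc ∏ j, ‖y (r j)‖ ≤ ∏ _j : Fin i, ‖y‖ :=
              Finset.prod_le_prod (fun _ _ => norm_nonneg _) fun j _ => PiLp.norm_apply_le y (r j)
          _ = ‖y‖ ^ i := by simp
      calc (∏ j, ‖y (r j)‖) * ‖f y‖
          ≤ ‖y‖ ^ i * (C₀ * Real.sqrt (1 + ‖y‖ ^ 2) ^ (-s)) := by gcongr
        _ = C₀ * (‖y‖ ^ i * Real.sqrt (1 + ‖y‖ ^ 2) ^ (-s)) := by ring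
        _ ≤ _ := by
          gcongr
          exact bracket_weight_le ‖y‖ (norm_nonneg y) s i k₂ hi.le
    have hterm := fun i (hi : i ∈ Finset.range k₂) =>
      integral_multilinear_eq_zero n k₂ f hmom hmono i (Finset.mem_range.1 hi) (p i)
    have hPeq : ∀ y, ((p.partialSum k₂ y : ℝ) : ℂ) * f y =
        ∑ i ∈ Finset.range k₂, ((p i fun _ => y : ℝ) : ℂ) * f y := by
      intro y
      rw [FormalMultilinearSeries.partialSum, Complex.ofReal_sum, Finset.sum_mul]
    have hPint : Integrable fun y => ((p.partialSum k₂ y : ℝ) : ℂ) * f y := by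
      simp_rw [hPeq]
      exact integrable_finsetSum _ fun i hi => (hterm i hi).1
    have hP0 : ∫ y, ((p.partialSum k₂ y : ℝ) : ℂ) * f y = 0 := by
      simp_rw [hPeq]
      rw [integral_finsetSum _ fun i hi => (hterm i hi).1]
      exact Finset.sum_eq_zero fun i hi => (hterm i hi).2
    have hsub : ∫ y, ((‖x - y‖ ^ (-a) : ℝ) : ℂ) * f y =
        ∫ y, ((‖x - y‖ ^ (-a) - p.partialSum k₂ y : ℝ) : ℂ) * f y := by
      rw [← sub_zero (∫ y, ((‖x - y‖ ^ (-a) : ℝ) : ℂ) * f y), ← hP0, ← integral_sub hKint hPint]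
      congr 1
      ext y
      push_cast
      ring
    have hbound : ∀ᵐ y, ‖((‖x - y‖ ^ (-a) - p.partialSum k₂ y : ℝ) : ℂ) * f y‖ ≤
        C₀ * (B₁ * ‖x‖ ^ (-a - k₂) * Real.sqrt (1 + ‖y‖ ^ 2) ^ (-(s - k₂)) +
          B₂ * ‖x‖ ^ (-a - s) * V (‖x‖⁻¹ • (x - y))) := by
      filter_upwards [hfb] with y hy
      have h1 := remainder_bound a s δ C₁ k₂ ha0 hs0 hδ hC₁ x y hx _ (hnear y) (hfar y)
      rw [← hB₁, ← hB₂] at h1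
      rw [norm_mul, Complex.norm_real, Real.norm_eq_abs]
      calc _ ≤ |‖x - y‖ ^ (-a) - p.partialSum k₂ y| *
            (C₀ * Real.sqrt (1 + ‖y‖ ^ 2) ^ (-s)) := by gcongr
        _ = C₀ * (|‖x - y‖ ^ (-a) - p.partialSum k₂ y| * Real.sqrt (1 + ‖y‖ ^ 2) ^ (-s)) := by
          ring
        _ ≤ _ := mul_le_mul_of_nonneg_left h1 hC₀.le
    obtain ⟨hVi, hVe⟩ := hVr ‖x‖ hr x
    have h1 := norm_integral_le_of_norm_le
      (((hJint.const_mul (B₁ * ‖x‖ ^ (-a - k₂))).add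
        (hVi.const_mul (B₂ * ‖x‖ ^ (-a - s)))).const_mul C₀) hbound
    simp only [Pi.add_apply] at h1
    rw [integral_const_mul, integral_add (hJint.const_mul _) (hVi.const_mul _),
      integral_const_mul, integral_const_mul, hVe, ← hsub, ← hD] at h1
    have h3 : ‖x‖ ^ (-a - s) * ‖x‖ ^ n ≤ ‖x‖ ^ (-a - k₂) := by
      rw [← Real.rpow_natCast, ← Real.rpow_add hr]
      exact Real.rpow_le_rpow_of_exponent_le hx1 (by linarith)
    have h4 := hbr ‖x‖ hr (by
      rw [← Real.sqrt_sq hr.le, ← Real.sqrt_mul (by norm_num), Real.sqrt_sq hr.le]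
      exact Real.sqrt_le_sqrt (by nlinarith))
    have hp : 0 < ‖x‖ ^ (-a - k₂) := Real.rpow_pos_of_pos hr _
    rw [mul_assoc A]
    clear_value D I
    refine h1.trans ?_
    calc _ = C₀ * (B₁ * D * ‖x‖ ^ (-a - k₂) + B₂ * I * (‖x‖ ^ (-a - s) * ‖x‖ ^ n)) := by ring
      _ ≤ C₀ * (B₁ * D * ‖x‖ ^ (-a - k₂) + B₂ * I * ‖x‖ ^ (-a - k₂)) := by gcongr
      _ = C₀ * (B₁ * D + B₂ * I) * ‖x‖ ^ (-a - k₂) := by ring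
      _ ≤ A * ‖x‖ ^ (-a - k₂) := by
        rw [hA]
        refine mul_le_mul_of_nonneg_right (mul_le_mul_of_nonneg_left ?_ hC₀.le) hp.le
        linarith
      _ ≤ _ := mul_le_mul_of_nonneg_left h4 hA0.le
end

section
/- Let n ≥ 1 be an integer, α > 0 a real number, and k ≥ 0 an integer. There is a constant C (depending on n, α, k) such that for every x ∈ ℝⁿ with |x| ≥ 1 there exists a polynomial P(x,·) : ℝⁿ → ℝ of degree at most k in y with the property that for all y ∈ ℝⁿ with y ≠ x: | |x−y|^{-α} − P(x,y) | ≤ C ( |y|^{k+1} |x|^{-α−k−1} + 𝟙_{\{2|y| ≥ |x|\}} |x−y|^{-α} ). -/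
open MeasureTheory

/-!
With `r = |y| / |x|` and `w = x·y / |x|²` one has
`|x - y|^{-α} = |x|^{-α} (1 + t)^{-α/2}`, where `t = r² - 2w` and `|w| ≤ r`. The polynomial
`P(x, ·)` is `|x|^{-α}` times the binomial expansion of `(1 + t)^{-α/2}` to order `k` in `t`, in
which each `t^j = (r² - 2w)^j` is multiplied out and the monomials `(r²)^m (-2w)^{j-m}`, of degree
`j + m` in `y`, are kept only if `j + m ≤ k`.

After dividing by `|x|^{-α}`, everything reduces to an estimate in the two real variables `r`, `w`
(`exists_scalar_expansion`).
* If `r < 1/4`, then `|t| ≤ 3r < 1` and the remainder of the binomial series is `O(r^{k+1})`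
  (`exists_binomial_remainder`); the discarded monomials are `O(r^{j+m})` with `j + m ≥ k + 1`.
* If `r ≥ 1/4`, then each kept monomial is `O(r^{k+1})` because its degree is at most `k`. The kernel
  itself is bounded when `r < 1/2`, since `1 + t ≥ (1 - r)²`, and is the indicator term otherwise.

The threshold `1/4` instead of `1/2` is needed because `|t|` may exceed `1` for `r` close to `1/2`.
-/

/-- Remainder of the binomial series of `(1 + t)^a`, uniformly on `|t| < 3/4`. -/
lemma exists_binomial_remainder (a : ℝ) (k : ℕ) :
    ∃ c : ℕ → ℝ, ∃ K > (0 : ℝ), ∀ t : ℝ, |t| < 3 / 4 →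
      |(1 + t) ^ a - ∑ j ∈ Finset.range (k + 1), c j * t ^ j| ≤ K * |t| ^ (k + 1) := by
  obtain ⟨b, ⟨hb0, hb1⟩, K, hK, h⟩ :=
    (Real.one_add_rpow_hasFPowerSeriesOnBall_zero (a := a)).uniform_geometric_approx'
      (r' := (3 / 4 : NNReal)) (by
        rw [← ENNReal.coe_one, ENNReal.coe_lt_coe, ← NNReal.coe_lt_coe]; push_cast; norm_num)
  refine ⟨fun j => Ring.choose a j, K * (b * (4 / 3)) ^ (k + 1), by positivity, fun t ht => ?_⟩
  have h1 := h t (by simpa using ht) (k + 1)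
  simp only [FormalMultilinearSeries.partialSum, binomialSeries_apply, zero_add, List.ofFn_const,
    List.prod_replicate, smul_eq_mul, Real.norm_eq_abs] at h1
  refine h1.trans (le_of_eq ?_)
  rw [mul_assoc, ← mul_pow]
  congr 2
  push_cast
  ring

/-- The monomial `(r²)^m (-2w)^{j-m}` has size at most `2^j r^{j+m}`. -/
lemma abs_monomial_le {r w : ℝ} (hr : 0 ≤ r) (hw : |w| ≤ r) {j m : ℕ} (hm : m ≤ j) :
    |(r ^ 2) ^ m * (-2 * w) ^ (j - m)| ≤ 2 ^ j * r ^ (m + j) := by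
  have h1 : |-2 * w| ≤ 2 * r := by
    rw [abs_mul]; norm_num; exact hw
  calc |(r ^ 2) ^ m * (-2 * w) ^ (j - m)|
      = (r ^ 2) ^ m * |-2 * w| ^ (j - m) := by
        rw [abs_mul, abs_of_nonneg (by positivity : 0 ≤ (r ^ 2) ^ m), abs_pow]
    _ ≤ (r ^ 2) ^ m * (2 * r) ^ (j - m) := by gcongr
    _ = 2 ^ (j - m) * r ^ (m + j) := by
        have : m + j = 2 * m + (j - m) := by omega
        rw [this, pow_add, pow_mul, mul_pow]; ring
    _ ≤ 2 ^ j * r ^ (m + j) := by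
        gcongr
        · norm_num
        · omega

/-- The approximation estimate after dividing by `|x|^{-α}`, in the variables `r = |y| / |x|` and
`w = x·y / |x|²`. -/
lemma exists_scalar_expansion (a : ℝ) (ha : a ≤ 0) (k : ℕ) :
    ∃ c : ℕ → ℝ, ∃ M > (0 : ℝ), ∀ r w : ℝ, 0 ≤ r → |w| ≤ r → 0 < 1 + (r ^ 2 + -2 * w) →
      |(1 + (r ^ 2 + -2 * w)) ^ a - ∑ j ∈ Finset.range (k + 1), ∑ m ∈ Finset.range (j + 1),
          if m + j ≤ k then c j * j.choose m * ((r ^ 2) ^ m * (-2 * w) ^ (j - m)) else 0|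
        ≤ M * (r ^ (k + 1) + if 1 ≤ 2 * r then (1 + (r ^ 2 + -2 * w)) ^ a else 0) := by
  obtain ⟨c, K, hK, hc⟩ := exists_binomial_remainder a k
  set B : ℝ := ∑ j ∈ Finset.range (k + 1), ∑ m ∈ Finset.range (j + 1),
    |c j * j.choose m| * 2 ^ j with hB
  have hB0 : 0 ≤ B := by positivity
  have hL : (0 : ℝ) < (1 / 4) ^ a := by positivity
  refine ⟨c, (K + B + (1 / 4) ^ a) * 4 ^ (k + 1) + 1, by positivity, fun r w hr hw hpos => ?_⟩
  set t := r ^ 2 + -2 * w with ht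
  -- Any sub-sum of the expansion is `O(r^{k+1})` if its monomials are; it is applied to the
  -- discarded monomials when `r < 1/4` and to the kept ones when `r ≥ 1/4`.
  have key : ∀ p : ℕ → ℕ → Prop, ∀ [∀ m j, Decidable (p m j)],
      (∀ m j, m ≤ j → j ≤ k → p m j → r ^ (m + j) ≤ 4 ^ (k + 1) * r ^ (k + 1)) →
      |∑ j ∈ Finset.range (k + 1), ∑ m ∈ Finset.range (j + 1),
        if p m j then c j * j.choose m * ((r ^ 2) ^ m * (-2 * w) ^ (j - m)) else 0|
        ≤ B * (4 ^ (k + 1) * r ^ (k + 1)) := by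
    intro p _ hp
    rw [hB, Finset.sum_mul]
    refine (Finset.abs_sum_le_sum_abs _ _).trans (Finset.sum_le_sum fun j hj => ?_)
    rw [Finset.sum_mul]
    refine (Finset.abs_sum_le_sum_abs _ _).trans (Finset.sum_le_sum fun m hm => ?_)
    have hj' := Finset.mem_range.1 hj
    have hm' := Finset.mem_range.1 hm
    split_ifs with h
    · rw [abs_mul, mul_assoc]
      gcongr
      refine (abs_monomial_le hr hw (by omega)).trans ?_
      gcongr
      exact hp m j (by omega) (by omega) h
    · rw [abs_zero]; positivity
  have hrk : 0 ≤ r ^ (k + 1) := by positivity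
  have h4 : (0 : ℝ) < 4 ^ (k + 1) := by positivity
  have hker : 0 < (1 + t) ^ a := by positivity
  obtain ⟨hw1, hw2⟩ := abs_le.1 hw
  rcases lt_or_ge r (1 / 4) with hr4 | hr4
  · have ht3 : |t| ≤ 4 * r := by rw [abs_le]; constructor <;> nlinarith
    have ht1 : |t| < 3 / 4 := by rw [abs_lt]; constructor <;> nlinarith
    have e1 := hc t ht1
    have e1' : K * |t| ^ (k + 1) ≤ K * (4 ^ (k + 1) * r ^ (k + 1)) := by
      rw [← mul_pow]; gcongr
    have e2 := key (fun m j => ¬ m + j ≤ k) (fun m j _ _ h => by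
      calc r ^ (m + j) ≤ r ^ (k + 1) := pow_le_pow_of_le_one hr (by linarith) (by omega)
        _ ≤ 4 ^ (k + 1) * r ^ (k + 1) :=
          le_mul_of_one_le_left hrk (one_le_pow₀ (by norm_num)))
    -- The full expansion of the Taylor polynomial is the kept part plus the discarded part.
    have split : ∑ j ∈ Finset.range (k + 1), c j * t ^ j =
        (∑ j ∈ Finset.range (k + 1), ∑ m ∈ Finset.range (j + 1),
          if m + j ≤ k then c j * j.choose m * ((r ^ 2) ^ m * (-2 * w) ^ (j - m)) else 0) +
        ∑ j ∈ Finset.range (k + 1), ∑ m ∈ Finset.range (j + 1),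
          if ¬ m + j ≤ k then c j * j.choose m * ((r ^ 2) ^ m * (-2 * w) ^ (j - m)) else 0 := by
      rw [← Finset.sum_add_distrib]
      refine Finset.sum_congr rfl fun j _ => ?_
      rw [← Finset.sum_add_distrib, ht, add_pow, Finset.mul_sum]
      refine Finset.sum_congr rfl fun m _ => ?_
      by_cases h : m + j ≤ k
      · simp only [h, not_true, if_true, if_false]; ring
      · simp only [h, not_false_eq_true, if_true, if_false]; ring
    rw [split] at e1
    rw [if_neg (by linarith)]
    rw [abs_le] at e1 e2 ⊢
    have hx : 0 ≤ (1 / 4 : ℝ) ^ a * 4 ^ (k + 1) * r ^ (k + 1) := by positivity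
    constructor <;> nlinarith [e1.1, e1.2, e2.1, e2.2]
  · have e2 := key (fun m j => m + j ≤ k) (fun m j _ _ h => by
      calc r ^ (m + j) ≤ (4 * r) ^ (m + j) := by gcongr; linarith
        _ ≤ (4 * r) ^ (k + 1) := pow_le_pow_right₀ (by linarith) (by omega)
        _ = 4 ^ (k + 1) * r ^ (k + 1) := mul_pow _ _ _)
    have hx : 0 ≤ K * 4 ^ (k + 1) * r ^ (k + 1) := by positivity
    have hx' : 0 ≤ (1 / 4 : ℝ) ^ a * 4 ^ (k + 1) * r ^ (k + 1) := by positivity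
    refine (abs_sub _ _).trans ?_
    rw [abs_of_pos hker]
    split_ifs with h2
    · have hy : 0 ≤ (K + B + (1 / 4 : ℝ) ^ a) * 4 ^ (k + 1) * (1 + t) ^ a := by positivity
      nlinarith
    · have e3 : (1 + t) ^ a ≤ (1 / 4) ^ a :=
        Real.rpow_le_rpow_of_nonpos (by norm_num) (by nlinarith) ha
      have e4 : (1 : ℝ) ≤ 4 ^ (k + 1) * r ^ (k + 1) := by
        rw [← mul_pow]; exact one_le_pow₀ (by linarith)
      nlinarith

/-- Polarization in the form `|x - y|^{-α} = |x|^{-α} (1 + |y|²/|x|² - 2 x·y/|x|²)^{-α/2}`. -/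
lemma norm_sub_rpow_eq {n : ℕ} (α : ℝ) {x : EuclideanSpace ℝ (Fin n)} (hx : 0 < ‖x‖)
    (y : EuclideanSpace ℝ (Fin n)) :
    1 + ((‖y‖ / ‖x‖) ^ 2 + -2 * (inner ℝ x y / ‖x‖ ^ 2)) = (‖x - y‖ / ‖x‖) ^ 2 ∧
    ‖x - y‖ ^ (-α) = ‖x‖ ^ (-α) *
      (1 + ((‖y‖ / ‖x‖) ^ 2 + -2 * (inner ℝ x y / ‖x‖ ^ 2))) ^ (-α / 2) := by
  have h1 : 1 + ((‖y‖ / ‖x‖) ^ 2 + -2 * (inner ℝ x y / ‖x‖ ^ 2)) = (‖x - y‖ / ‖x‖) ^ 2 := by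
    rw [div_pow, div_pow, norm_sub_sq_real]
    field_simp
    ring
  refine ⟨h1, ?_⟩
  rw [h1, ← Real.rpow_natCast, ← Real.rpow_mul (by positivity),
    Real.div_rpow (norm_nonneg _) (norm_nonneg _)]
  have h2 : ((2 : ℕ) : ℝ) * (-α / 2) = -α := by push_cast; ring
  rw [h2]
  have : ‖x‖ ^ (-α) ≠ 0 := by positivity
  field_simp

/-- Polynomial approximation of the kernel `|x−y|^{-α}`: for every `|x| ≥ 1` there is a
polynomial `P(x,·)` of degree at most `k` in `y` with
`||x−y|^{-α} − P(x,y)| ≤ C(|y|^{k+1}|x|^{-α−k−1} + 𝟙_{2|y| ≥ |x|}|x−y|^{-α})`. -/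
theorem stmt_4 (n : ℕ) (hn : 1 ≤ n) (α : ℝ) (hα : 0 < α) (k : ℕ) :
    ∃ C > (0 : ℝ), ∀ x : EuclideanSpace ℝ (Fin n), 1 ≤ ‖x‖ →
      ∃ P : MvPolynomial (Fin n) ℝ, P.totalDegree ≤ k ∧
        ∀ y : EuclideanSpace ℝ (Fin n), y ≠ x →
          |‖x - y‖ ^ (-α) - MvPolynomial.eval (fun i => y i) P| ≤
            C * (‖y‖ ^ ((k : ℝ) + 1) * ‖x‖ ^ (-α - k - 1) +
              (if ‖x‖ ≤ 2 * ‖y‖ then ‖x - y‖ ^ (-α) else 0)) := by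
  obtain ⟨c, M, hM, h⟩ := exists_scalar_expansion (-α / 2) (by linarith) k
  refine ⟨M, hM, fun x hx1 => ?_⟩
  have hx : 0 < ‖x‖ := by linarith
  -- `U` and `V` are the polynomials in `y` representing `r²` and `-2w`.
  let U : MvPolynomial (Fin n) ℝ :=
    ∑ i, MvPolynomial.C ((‖x‖ ^ 2)⁻¹) * MvPolynomial.X i ^ 2
  let V : MvPolynomial (Fin n) ℝ :=
    ∑ i, MvPolynomial.C (-2 * (x i / ‖x‖ ^ 2)) * MvPolynomial.X i
  have hU : U.totalDegree ≤ 2 := by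
    refine MvPolynomial.totalDegree_finsetSum_le fun i _ => ?_
    refine (MvPolynomial.totalDegree_mul _ _).trans ?_
    rw [MvPolynomial.totalDegree_C, MvPolynomial.totalDegree_X_pow]
  have hV : V.totalDegree ≤ 1 := by
    refine MvPolynomial.totalDegree_finsetSum_le fun i _ => ?_
    refine (MvPolynomial.totalDegree_mul _ _).trans ?_
    rw [MvPolynomial.totalDegree_C, MvPolynomial.totalDegree_X]
  have eU : ∀ y : EuclideanSpace ℝ (Fin n),
      MvPolynomial.eval (fun i => y i) U = (‖y‖ / ‖x‖) ^ 2 := by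
    intro y
    simp only [U, map_sum, map_mul, map_pow, MvPolynomial.eval_C, MvPolynomial.eval_X]
    rw [← Finset.mul_sum, div_pow, EuclideanSpace.real_norm_sq_eq y]
    ring
  have eV : ∀ y : EuclideanSpace ℝ (Fin n),
      MvPolynomial.eval (fun i => y i) V = -2 * (inner ℝ x y / ‖x‖ ^ 2) := by
    intro y
    simp only [V, map_sum, map_mul, MvPolynomial.eval_C, MvPolynomial.eval_X, PiLp.inner_apply,
      Finset.sum_div, Finset.mul_sum]
    refine Finset.sum_congr rfl fun i _ => ?_
    simp
    ring
  refine ⟨∑ j ∈ Finset.range (k + 1), ∑ m ∈ Finset.range (j + 1),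
    if m + j ≤ k then MvPolynomial.C (‖x‖ ^ (-α) * (c j * j.choose m)) * (U ^ m * V ^ (j - m))
    else 0, ?_, fun y hy => ?_⟩
  · refine MvPolynomial.totalDegree_finsetSum_le fun j _ =>
      MvPolynomial.totalDegree_finsetSum_le fun m hm => ?_
    have hm' := Finset.mem_range.1 hm
    split_ifs with hmj
    · have d1 := MvPolynomial.totalDegree_mul
        (MvPolynomial.C (‖x‖ ^ (-α) * (c j * j.choose m))) (U ^ m * V ^ (j - m))
      have d2 := MvPolynomial.totalDegree_mul (U ^ m) (V ^ (j - m))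
      have d3 := (MvPolynomial.totalDegree_pow U m).trans (Nat.mul_le_mul_left m hU)
      have d4 := (MvPolynomial.totalDegree_pow V (j - m)).trans (Nat.mul_le_mul_left (j - m) hV)
      rw [MvPolynomial.totalDegree_C] at d1
      omega
    · simp
  · obtain ⟨h1, h2⟩ := norm_sub_rpow_eq α hx y
    have hxy : 0 < ‖x - y‖ := norm_pos_iff.2 (sub_ne_zero.2 hy.symm)
    have hs := h (‖y‖ / ‖x‖) (inner ℝ x y / ‖x‖ ^ 2) (by positivity) (by
      rw [abs_div, abs_of_pos (pow_pos hx 2), div_le_div_iff₀ (by positivity) hx]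
      nlinarith [abs_real_inner_le_norm x y]) (by rw [h1]; positivity)
    have hP : MvPolynomial.eval (fun i => y i) (∑ j ∈ Finset.range (k + 1),
        ∑ m ∈ Finset.range (j + 1), if m + j ≤ k then
          MvPolynomial.C (‖x‖ ^ (-α) * (c j * j.choose m)) * (U ^ m * V ^ (j - m)) else 0) =
        ‖x‖ ^ (-α) * ∑ j ∈ Finset.range (k + 1), ∑ m ∈ Finset.range (j + 1),
          if m + j ≤ k then c j * j.choose m * (((‖y‖ / ‖x‖) ^ 2) ^ m *
            (-2 * (inner ℝ x y / ‖x‖ ^ 2)) ^ (j - m)) else 0 := by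
      rw [map_sum, Finset.mul_sum]
      refine Finset.sum_congr rfl fun j _ => ?_
      rw [map_sum, Finset.mul_sum]
      refine Finset.sum_congr rfl fun m _ => ?_
      split_ifs
      · rw [MvPolynomial.eval_mul, MvPolynomial.eval_C, map_mul, map_pow, map_pow, eU, eV]; ring
      · simp
    have hiff : (1 ≤ 2 * (‖y‖ / ‖x‖)) ↔ ‖x‖ ≤ 2 * ‖y‖ := by
      rw [← mul_div_assoc, one_le_div hx]
    have hpow : ‖y‖ ^ ((k : ℝ) + 1) * ‖x‖ ^ (-α - k - 1) =
        ‖x‖ ^ (-α) * (‖y‖ / ‖x‖) ^ (k + 1) := by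
      have e : -α - k - 1 = -α - ((k + 1 : ℕ) : ℝ) := by push_cast; ring
      have e' : (k : ℝ) + 1 = ((k + 1 : ℕ) : ℝ) := by push_cast; ring
      rw [e, e', Real.rpow_sub hx, Real.rpow_natCast, Real.rpow_natCast, div_pow]
      ring
    have hxa : 0 < ‖x‖ ^ (-α) := by positivity
    rw [hP, hpow, h2, ← mul_sub, abs_mul, abs_of_pos hxa]
    refine (mul_le_mul_of_nonneg_left hs hxa.le).trans (le_of_eq ?_)
    simp only [hiff]
    split_ifs <;> ring
end

section
/- Fix integers n > 2m ≥ 2 and j ≥ 0, a real η > −1, constants C₀ > 0 and λ₀ ∈ (0,1), and set N := ⌈n/2⌉ + 1. Let r₁, r₂ > 0 with r₁ ≤ 1 and r₂ ≤ 1, and let σ ∈ {+1, −1}. Suppose a, b₁, b₂ : (0,1) → ℂ are N times continuously differentiable, vanish for λ ≥ λ₀, and satisfy for all 0 ≤ ℓ ≤ N and λ ∈ (0,1): |a^{(ℓ)}(λ)| ≤ C₀ λ^{η−ℓ}, |b₁^{(ℓ)}(λ)| ≤ C₀ λ^{-ℓ} ⟨λr₁⟩^{(n+1)/2−2m+j},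 and |b₂^{(ℓ)}(λ)| ≤ C₀ λ^{-ℓ} ⟨λr₂⟩^{(1−n)/2}. Then |∫₀¹ e^{iλ(r₁+σ r₂)} a(λ) b₁(λ) b₂(λ) dλ| ≤ C, where C depends only on n, m, j, η, C₀, λ₀. -/
open MeasureTheory

/-!
No oscillation is needed when `r₁, r₂ ≤ 1`. On `(0, 1)` the brackets `⟨λ rᵢ⟩` lie in `[1, 2]`, so any
fixed power of them is bounded (`bracket_rpow_le`). The size bounds (`ℓ = 0`) on the amplitudes then
dominate the integrand by a constant multiple of `λ ^ η`, which is integrable on `(0, 1)` because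
`η > -1`.
-/

lemma bracket_rpow_le {lam r p : ℝ} (hl : lam ∈ Set.Ioo (0 : ℝ) 1) (hr : 0 < r) (hr1 : r ≤ 1) :
    Real.sqrt (1 + (lam * r) ^ 2) ^ p ≤ (2 : ℝ) ^ |p| := by
  have h0 : 0 ≤ lam * r := mul_nonneg hl.1.le hr.le
  have h1 : lam * r ≤ 1 := mul_le_one₀ hl.2.le hr.le hr1
  have hs1 : 1 ≤ Real.sqrt (1 + (lam * r) ^ 2) := Real.one_le_sqrt.2 (by nlinarith)
  have hs2 : Real.sqrt (1 + (lam * r) ^ 2) ≤ 2 := Real.sqrt_le_iff.2 ⟨by norm_num, by nlinarith⟩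
  calc Real.sqrt (1 + (lam * r) ^ 2) ^ p
      ≤ Real.sqrt (1 + (lam * r) ^ 2) ^ |p| := Real.rpow_le_rpow_of_exponent_le hs1 (le_abs_self p)
    _ ≤ (2 : ℝ) ^ |p| := Real.rpow_le_rpow (by linarith) hs2 (abs_nonneg p)

/-- Bound `Λ_{j,η}(r₁,r₂) ≤ C` when `r₁, r₂ ≤ 1`. -/
theorem stmt_5 (n m j : ℕ) (hm : 1 ≤ m) (hn : 2 * m < n) (η : ℝ) (hη : -1 < η)
    (C₀ : ℝ) (hC₀ : 0 < C₀) (lam0 : ℝ) (hlam0 : 0 < lam0) (hlam0' : lam0 < 1) :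
    ∃ C > (0 : ℝ), ∀ r₁ r₂ : ℝ, 0 < r₁ → r₁ ≤ 1 → 0 < r₂ → r₂ ≤ 1 →
      ∀ σ : ℝ, (σ = 1 ∨ σ = -1) →
      ∀ a b₁ b₂ : ℝ → ℂ,
        ContDiffOn ℝ ((n + 1) / 2 + 1 : ℕ) a (Set.Ioo 0 1) →
        ContDiffOn ℝ ((n + 1) / 2 + 1 : ℕ) b₁ (Set.Ioo 0 1) →
        ContDiffOn ℝ ((n + 1) / 2 + 1 : ℕ) b₂ (Set.Ioo 0 1) →
        (∀ lam : ℝ, lam0 ≤ lam → a lam = 0) →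
        (∀ lam : ℝ, lam0 ≤ lam → b₁ lam = 0) →
        (∀ lam : ℝ, lam0 ≤ lam → b₂ lam = 0) →
        (∀ ℓ ≤ (n + 1) / 2 + 1, ∀ lam ∈ Set.Ioo (0 : ℝ) 1,
          ‖iteratedDerivWithin ℓ a (Set.Ioo 0 1) lam‖ ≤ C₀ * lam ^ (η - ℓ)) →
        (∀ ℓ ≤ (n + 1) / 2 + 1, ∀ lam ∈ Set.Ioo (0 : ℝ) 1,
          ‖iteratedDerivWithin ℓ b₁ (Set.Ioo 0 1) lam‖ ≤
            C₀ * lam ^ (-(ℓ : ℝ)) *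
              Real.sqrt (1 + (lam * r₁) ^ 2) ^ (((n : ℝ) + 1) / 2 - 2 * m + j)) →
        (∀ ℓ ≤ (n + 1) / 2 + 1, ∀ lam ∈ Set.Ioo (0 : ℝ) 1,
          ‖iteratedDerivWithin ℓ b₂ (Set.Ioo 0 1) lam‖ ≤
            C₀ * lam ^ (-(ℓ : ℝ)) *
              Real.sqrt (1 + (lam * r₂) ^ 2) ^ ((1 - (n : ℝ)) / 2)) →
        ‖∫ lam in Set.Ioo (0 : ℝ) 1,
            Complex.exp (Complex.I * Complex.ofReal ((r₁ + σ * r₂) * lam)) *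
              (a lam * b₁ lam * b₂ lam)‖ ≤ C := by
  set p : ℝ := ((n : ℝ) + 1) / 2 - 2 * m + j
  set q : ℝ := (1 - (n : ℝ)) / 2
  set K : ℝ := C₀ * (C₀ * 2 ^ |p|) * (C₀ * 2 ^ |q|) with hK
  have hint : IntegrableOn (fun lam : ℝ => K * lam ^ η) (Set.Ioo 0 1) :=
    ((intervalIntegral.integrableOn_Ioo_rpow_iff one_pos).2 hη).const_mul K
  -- Adding `1` makes the constant positive without evaluating the integral.
  refine ⟨|∫ lam in Set.Ioo (0 : ℝ) 1, K * lam ^ η| + 1, by positivity, ?_⟩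
  intro r₁ r₂ hr₁ hr₁' hr₂ hr₂' σ _ a b₁ b₂ _ _ _ _ _ _ ha hb₁ hb₂
  refine le_trans (norm_integral_le_of_norm_le hint ?_)
    ((le_abs_self _).trans (le_add_of_nonneg_right zero_le_one))
  filter_upwards [ae_restrict_mem measurableSet_Ioo] with lam hl
  have h1 := ha 0 (Nat.zero_le _) lam hl
  have h2 := hb₁ 0 (Nat.zero_le _) lam hl
  have h3 := hb₂ 0 (Nat.zero_le _) lam hl
  simp only [iteratedDerivWithin_zero, Nat.cast_zero, sub_zero, neg_zero, Real.rpow_zero,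
    mul_one] at h1 h2 h3
  have h2' : ‖b₁ lam‖ ≤ C₀ * 2 ^ |p| :=
    h2.trans (mul_le_mul_of_nonneg_left (bracket_rpow_le hl hr₁ hr₁') hC₀.le)
  have h3' : ‖b₂ lam‖ ≤ C₀ * 2 ^ |q| :=
    h3.trans (mul_le_mul_of_nonneg_left (bracket_rpow_le hl hr₂ hr₂') hC₀.le)
  have hη0 : 0 ≤ lam ^ η := Real.rpow_nonneg hl.1.le η
  rw [norm_mul, Complex.norm_exp_I_mul_ofReal, one_mul, norm_mul, norm_mul]
  calc ‖a lam‖ * ‖b₁ lam‖ * ‖b₂ lam‖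
      ≤ C₀ * lam ^ η * (C₀ * 2 ^ |p|) * (C₀ * 2 ^ |q|) := by gcongr
    _ = K * lam ^ η := by rw [hK]; ring
end

section
/- Let n ≥ 1, k₀ ≥ 1, j ≥ 0 be integers with j ≤ k₀ − 1. Suppose g₁, g₂ : ℝⁿ → ℂ are measurable with ∫_{ℝⁿ} ⟨x⟩^{2j} |g_i(x)| dx < ∞ for i = 1,2, and ∫_{ℝⁿ} x^α g_i(x) dx = 0 for i = 1,2 and every multi-index α with |α| ≤ k₀ − 1. Then ∫_{ℝⁿ} ∫_{ℝⁿ} \overline{g₁(x)} |x−y|^{2j} g₂(y) dy dx = 0. -/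
/-!
The kernel `‖x - y‖ ^ (2 * j)` is a polynomial of total degree at most `2 * j` in the `2 * n`
coordinates of `x` and `y`, hence a finite sum of products `c * x ^ α * y ^ β` with
`|α| + |β| ≤ 2 * j` (`kernelPoly`, `kernelPoly_degree`). The weight `(1 + ‖x‖ ^ 2) ^ j` dominates
every monomial of degree at most `2 * j` (`integrable_monomial_mul`), so the double integral splits
into a finite sum of products of a moment of `conj g₁` and a moment of `g₂`. In each term one of
`|α|`, `|β|` is at most `j < k₀`, so one of the two moments vanishes.
-/

open MeasureTheory

/-- The polynomial `(∑ i, (X i - Y i) ^ 2) ^ j`, where `Sum.inl` indexes the variables `X` and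
`Sum.inr` the variables `Y`. -/
noncomputable def kernelPoly (n j : ℕ) : MvPolynomial (Fin n ⊕ Fin n) ℝ :=
  (∑ i, (MvPolynomial.X (Sum.inl i) - MvPolynomial.X (Sum.inr i)) ^ 2) ^ j

lemma kernelPoly_totalDegree (n j : ℕ) : (kernelPoly n j).totalDegree ≤ 2 * j := by
  have h : (∑ i : Fin n, (MvPolynomial.X (Sum.inl i) - MvPolynomial.X (Sum.inr i)) ^ 2 :
      MvPolynomial (Fin n ⊕ Fin n) ℝ).totalDegree ≤ 2 := by
    refine MvPolynomial.totalDegree_finsetSum_le fun i _ => ?_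
    refine (MvPolynomial.totalDegree_pow _ _).trans ?_
    have := MvPolynomial.totalDegree_sub (R := ℝ) (MvPolynomial.X (Sum.inl i : Fin n ⊕ Fin n))
      (MvPolynomial.X (Sum.inr i))
    simp only [MvPolynomial.totalDegree_X, max_self] at this
    omega
  refine (MvPolynomial.totalDegree_pow _ _).trans ?_
  rw [mul_comm 2 j]
  gcongr

lemma kernelPoly_degree {n j : ℕ} {m : Fin n ⊕ Fin n →₀ ℕ} (hm : m ∈ (kernelPoly n j).support) :
    ∑ i, m (Sum.inl i) + ∑ i, m (Sum.inr i) ≤ 2 * j := by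
  have h := (MvPolynomial.le_totalDegree hm).trans (kernelPoly_totalDegree n j)
  rwa [Finsupp.sum_fintype _ _ (fun _ => rfl), Fintype.sum_sum_type] at h

lemma norm_sub_pow_eq_sum (n j : ℕ) (x y : EuclideanSpace ℝ (Fin n)) :
    ‖x - y‖ ^ (2 * j) = ∑ m ∈ (kernelPoly n j).support, (kernelPoly n j).coeff m *
      ((∏ i, x i ^ m (Sum.inl i)) * ∏ i, y i ^ m (Sum.inr i)) := by
  have h : MvPolynomial.eval (Sum.elim x y) (kernelPoly n j) = ‖x - y‖ ^ (2 * j) := by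
    rw [pow_mul, EuclideanSpace.real_norm_sq_eq]
    simp [kernelPoly]
  rw [← h, MvPolynomial.eval_eq']
  simp [Fintype.prod_sum_type]

lemma abs_monomial_le_s10 {n j : ℕ} (α : Fin n → ℕ) (hα : ∑ i, α i ≤ 2 * j)
    (x : EuclideanSpace ℝ (Fin n)) : |∏ i, x i ^ α i| ≤ (1 + ‖x‖ ^ 2) ^ j := by
  have h1 : 1 ≤ √(1 + ‖x‖ ^ 2) := Real.one_le_sqrt.2 (by nlinarith [sq_nonneg ‖x‖])
  calc |∏ i, x i ^ α i| = ∏ i, |x i| ^ α i := by simp [Finset.abs_prod]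
    _ ≤ ∏ i, √(1 + ‖x‖ ^ 2) ^ α i := by
        gcongr with i
        have h2 : |x i| ≤ ‖x‖ := by simpa using PiLp.norm_apply_le x i
        exact h2.trans (Real.le_sqrt_of_sq_le (by linarith))
    _ = √(1 + ‖x‖ ^ 2) ^ (∑ i, α i) := Finset.prod_pow_eq_pow_sum _ _ _
    _ ≤ √(1 + ‖x‖ ^ 2) ^ (2 * j) := pow_le_pow_right₀ h1 hα
    _ = (1 + ‖x‖ ^ 2) ^ j := by rw [pow_mul, Real.sq_sqrt (by positivity)]

lemma integrable_monomial_mul {n j : ℕ} {g : EuclideanSpace ℝ (Fin n) → ℂ} (hg : Measurable g)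
    (hint : Integrable (fun x : EuclideanSpace ℝ (Fin n) => (1 + ‖x‖ ^ 2) ^ j * ‖g x‖))
    (α : Fin n → ℕ) (hα : ∑ i, α i ≤ 2 * j) :
    Integrable (fun x => ((∏ i, (x i) ^ (α i) : ℝ) : ℂ) * g x) := by
  refine hint.mono' ?_ (Filter.Eventually.of_forall fun x => ?_)
  · have : Continuous fun x : EuclideanSpace ℝ (Fin n) => ((∏ i, (x i) ^ (α i) : ℝ) : ℂ) := by
      fun_prop
    exact (this.measurable.mul hg).aestronglyMeasurable
  · rw [norm_mul, Complex.norm_real, Real.norm_eq_abs]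
    gcongr
    exact abs_monomial_le_s10 α hα x

/-- Two-sided cancellation: if `g₁, g₂` have vanishing moments up to order `k₀−1` and
`j ≤ k₀−1`, then `∫∫ conj(g₁(x)) |x−y|^{2j} g₂(y) dy dx = 0`. -/
theorem stmt_10 (n k₀ j : ℕ) (hn : 1 ≤ n) (hk₀ : 1 ≤ k₀) (hj : j + 1 ≤ k₀)
    (g₁ g₂ : EuclideanSpace ℝ (Fin n) → ℂ) (hg₁ : Measurable g₁) (hg₂ : Measurable g₂)
    (hint₁ : Integrable (fun x : EuclideanSpace ℝ (Fin n) => (1 + ‖x‖ ^ 2) ^ j * ‖g₁ x‖))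
    (hint₂ : Integrable (fun x : EuclideanSpace ℝ (Fin n) => (1 + ‖x‖ ^ 2) ^ j * ‖g₂ x‖))
    (hmom₁ : ∀ α : Fin n → ℕ, (∑ i, α i) < k₀ →
      ∫ x, ((∏ i, (x i) ^ (α i) : ℝ) : ℂ) * g₁ x = 0)
    (hmom₂ : ∀ α : Fin n → ℕ, (∑ i, α i) < k₀ →
      ∫ x, ((∏ i, (x i) ^ (α i) : ℝ) : ℂ) * g₂ x = 0) :
    ∫ x, ∫ y, (starRingEnd ℂ) (g₁ x) * ((‖x - y‖ ^ (2 * j) : ℝ) : ℂ) * g₂ y = 0 := by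
  have hI₁ := fun m (hm : m ∈ (kernelPoly n j).support) =>
    integrable_monomial_mul hg₁ hint₁ (fun i => m (Sum.inl i))
      (le_trans (Nat.le_add_right _ _) (kernelPoly_degree hm))
  have hI₂ := fun m (hm : m ∈ (kernelPoly n j).support) =>
    integrable_monomial_mul hg₂ hint₂ (fun i => m (Sum.inr i))
      (le_trans (Nat.le_add_left _ _) (kernelPoly_degree hm))
  have inner (x : EuclideanSpace ℝ (Fin n)) :
      ∫ y, (starRingEnd ℂ) (g₁ x) * ((‖x - y‖ ^ (2 * j) : ℝ) : ℂ) * g₂ y =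
      ∑ m ∈ (kernelPoly n j).support,
        ((((kernelPoly n j).coeff m : ℝ) : ℂ) * ∫ y, ((∏ i, y i ^ m (Sum.inr i) : ℝ) : ℂ) * g₂ y) *
          (starRingEnd ℂ) (((∏ i, x i ^ m (Sum.inl i) : ℝ) : ℂ) * g₁ x) := by
    have e (y : EuclideanSpace ℝ (Fin n)) :
        (starRingEnd ℂ) (g₁ x) * ((‖x - y‖ ^ (2 * j) : ℝ) : ℂ) * g₂ y =
        ∑ m ∈ (kernelPoly n j).support, ((((kernelPoly n j).coeff m : ℝ) : ℂ) *
          (starRingEnd ℂ) (((∏ i, x i ^ m (Sum.inl i) : ℝ) : ℂ) * g₁ x)) *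
          (((∏ i, y i ^ m (Sum.inr i) : ℝ) : ℂ) * g₂ y) := by
      rw [norm_sub_pow_eq_sum, Complex.ofReal_sum, Finset.mul_sum, Finset.sum_mul]
      refine Finset.sum_congr rfl fun m _ => ?_
      rw [map_mul, Complex.conj_ofReal, Complex.ofReal_mul, Complex.ofReal_mul]
      ring
    simp_rw [e]
    rw [integral_finsetSum _ fun m hm => (hI₂ m hm).const_mul _]
    refine Finset.sum_congr rfl fun m _ => ?_
    rw [integral_const_mul]
    ring
  simp_rw [inner]
  rw [integral_finsetSum]
  swap
  · intro m hm
    exact ((Complex.conjCLE.integrable_comp_iff).2 (hI₁ m hm)).const_mul _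
  refine Finset.sum_eq_zero fun m hm => ?_
  rw [integral_const_mul, integral_conj]
  have hd := kernelPoly_degree hm
  rcases le_total (∑ i, m (Sum.inl i)) (∑ i, m (Sum.inr i)) with h | h
  · rw [hmom₁ (fun i => m (Sum.inl i)) (by omega), map_zero, mul_zero]
  · rw [hmom₂ (fun i => m (Sum.inr i)) (by omega), mul_zero, zero_mul]
end

section
/- Let n ≥ 1 and i ≥ 1 be integers. There exists a constant C_i (depending only on i) such that for all x, z ∈ ℝⁿ and s ∈ ℝ with x ≠ sz, the i-th derivative with respect to s of the function s ↦ |x − sz| satisfies | (d/ds)^i |x − sz| | ≤ C_i |x − sz|^{1−i} |z|^{i}. -/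
/-!
Put `f t = ‖x - t • z‖`. Its square is a quadratic polynomial `q` in `t`, so the Leibniz rule
applied to `f * f = q` at a point where `f ≠ 0` gives
`2 f f⁽ⁱ⁾ = q⁽ⁱ⁾ - ∑_{0 < k < i} (i choose k) f⁽ᵏ⁾ f⁽ⁱ⁻ᵏ⁾`.
The derivatives of `q` obey `|q⁽ⁱ⁾| ≤ 2 f²⁻ⁱ ‖z‖ⁱ` for `i ≥ 1` (`abs_iteratedDeriv_sq_le`), and
strong induction on `i` yields the claim (`exists_bound`). To keep all exponents natural, the
estimates are written multiplied by `fⁱ`.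
-/

open MeasureTheory

/-- The derivatives of order at least `1` of the quadratic `q`: the first is
`-2 ⟪x - t • z, z⟫`, the second is `2 ‖z‖²`, and the later ones vanish. -/
theorem abs_iteratedDeriv_sq_le {n : ℕ} (x z : EuclideanSpace ℝ (Fin n)) (s : ℝ) (m : ℕ) :
    |iteratedDeriv (m + 1) (fun t : ℝ => ‖x - t • z‖ * ‖x - t • z‖) s| * ‖x - s • z‖ ^ (m + 1) ≤
      2 * ‖x - s • z‖ ^ 2 * ‖z‖ ^ (m + 1) := by
  have h0 : ∀ t : ℝ, HasDerivAt (fun t : ℝ => x - t • z) (-z) t := fun t => by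
    simpa using ((hasDerivAt_id t).smul_const z).const_sub x
  have h1 : deriv (fun t : ℝ => ‖x - t • z‖ * ‖x - t • z‖) =
      fun t => -2 * inner ℝ (x - t • z) z := by
    funext t
    have h := (h0 t).norm_sq
    simp only [pow_two] at h
    rw [h.deriv, inner_neg_right]
    ring
  have h2 : deriv (fun t : ℝ => -2 * inner ℝ (x - t • z) z) = fun _ => 2 * ‖z‖ ^ 2 := by
    funext t
    have h := (((h0 t).inner ℝ (hasDerivAt_const t z)).const_mul (-2 : ℝ))
    rw [h.deriv]
    simp
  rw [iteratedDeriv_succ', h1]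
  rcases m with _ | m
  · have := abs_real_inner_le_norm (x - s • z) z
    simp only [iteratedDeriv_zero, abs_mul, zero_add, pow_one]
    norm_num
    nlinarith [norm_nonneg (x - s • z)]
  · rw [iteratedDeriv_succ', h2]
    rcases m with _ | m
    · simp [abs_mul]
      nlinarith
    · rw [iteratedDeriv_const]
      simp
      positivity

theorem exists_bound (i : ℕ) :
    ∃ C ≥ (0 : ℝ), ∀ (n : ℕ) (x z : EuclideanSpace ℝ (Fin n)) (s : ℝ), x ≠ s • z →
      |iteratedDeriv i (fun t : ℝ => ‖x - t • z‖) s| * ‖x - s • z‖ ^ i ≤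
        C * ‖x - s • z‖ * ‖z‖ ^ i := by
  induction i using Nat.strong_induction_on with
  | _ i ih =>
    rcases i with _ | m
    · exact ⟨1, by simp, fun n x z s _ => by simp⟩
    choose! c hc0 hc using ih
    refine ⟨1 + (∑ k ∈ Finset.range m,
      ((m + 1).choose (k + 1) : ℝ) * c (k + 1) * c (m - k)) / 2, ?_, ?_⟩
    · have : 0 ≤ ∑ k ∈ Finset.range m,
          ((m + 1).choose (k + 1) : ℝ) * c (k + 1) * c (m - k) := by
        refine Finset.sum_nonneg fun k hk => ?_
        have hk := Finset.mem_range.1 hk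
        have := hc0 (k + 1) (by omega)
        have := hc0 (m - k) (by omega)
        positivity
      positivity
    intro n x z s hxs
    have hw : x - s • z ≠ 0 := sub_ne_zero.2 hxs
    have hr : 0 < ‖x - s • z‖ := norm_pos_iff.2 hw
    have hq := abs_iteratedDeriv_sq_le x z s m
    have hf : ContDiffAt ℝ (m + 1 : ℕ) (fun t : ℝ => ‖x - t • z‖) s :=
      ContDiffAt.norm ℝ (by fun_prop) hw
    have hL := iteratedDeriv_fun_mul hf hf
    rw [Finset.sum_range_succ, Finset.sum_range_succ'] at hL
    simp only [Nat.choose_zero_right, Nat.choose_self, Nat.sub_self, Nat.sub_zero,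
      iteratedDeriv_zero, Nat.cast_one, one_mul, Nat.add_sub_add_right] at hL
    set F : ℕ → ℝ := fun k => iteratedDeriv k (fun t : ℝ => ‖x - t • z‖) s with hF
    set r := ‖x - s • z‖ with hrdef
    have hS : |∑ k ∈ Finset.range m, ((m + 1).choose (k + 1) : ℝ) * F (k + 1) * F (m - k)|
        * r ^ (m + 1) ≤ (∑ k ∈ Finset.range m,
          ((m + 1).choose (k + 1) : ℝ) * c (k + 1) * c (m - k)) * (r ^ 2 * ‖z‖ ^ (m + 1)) := by
      refine (mul_le_mul_of_nonneg_right (Finset.abs_sum_le_sum_abs _ _) (by positivity)).trans ?_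
      rw [Finset.sum_mul, Finset.sum_mul]
      refine Finset.sum_le_sum fun k hk => ?_
      have hk := Finset.mem_range.1 hk
      have hA := hc (k + 1) (by omega) n x z s hxs
      have hB := hc (m - k) (by omega) n x z s hxs
      have hcA := hc0 (k + 1) (by omega)
      have hAB := mul_le_mul hA hB (by positivity) (by positivity)
      have he : m + 1 = (k + 1) + (m - k) := by omega
      have hp : ∀ a : ℝ, a ^ (m + 1) = a ^ (k + 1) * a ^ (m - k) := fun a => by
        rw [← pow_add, ← he]
      rw [hp, hp, abs_mul, abs_mul, Nat.abs_cast]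
      have := mul_le_mul_of_nonneg_left hAB (Nat.cast_nonneg (α := ℝ) ((m + 1).choose (k + 1)))
      calc _ = _ := ?_
        _ ≤ _ := this
        _ = _ := by ring
      simp only [hF]
      ring
    set S := ∑ k ∈ Finset.range m, ((m + 1).choose (k + 1) : ℝ) * F (k + 1) * F (m - k) with hSdef
    set Q := iteratedDeriv (m + 1) (fun t : ℝ => ‖x - t • z‖ * ‖x - t • z‖) s with hQ
    have hL' : 2 * r * F (m + 1) = Q - S := by
      rw [hL]
      simp only [hF, hSdef]
      ring
    have habs : 2 * r * |F (m + 1)| ≤ |Q| + |S| := by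
      have := abs_sub Q S
      rwa [← hL', abs_mul, abs_of_pos (by positivity : 0 < 2 * r)] at this
    have hfin := mul_le_mul_of_nonneg_right habs (by positivity : 0 ≤ r ^ (m + 1))
    change |F (m + 1)| * r ^ (m + 1) ≤ _
    refine le_of_mul_le_mul_left ?_ (by positivity : 0 < 2 * r)
    linarith

/-- Bound for the `i`-th derivative of `s ↦ |x − sz|`:
`|(d/ds)^i |x − sz|| ≤ C_i |x − sz|^{1−i} |z|^i`. -/
theorem stmt_12 (i : ℕ) (hi : 1 ≤ i) :
    ∃ C > (0 : ℝ), ∀ (n : ℕ), 1 ≤ n →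
      ∀ (x z : EuclideanSpace ℝ (Fin n)) (s : ℝ), x ≠ s • z →
        |iteratedDeriv i (fun t : ℝ => ‖x - t • z‖) s| ≤
          C * ‖x - s • z‖ ^ ((1 : ℝ) - i) * ‖z‖ ^ i := by
  obtain ⟨C, hC, h⟩ := exists_bound i
  refine ⟨C + 1, by positivity, fun n _ x z s hxs => ?_⟩
  have hr : 0 < ‖x - s • z‖ := norm_pos_iff.2 (sub_ne_zero.2 hxs)
  have h' := h n x z s hxs
  rw [Real.rpow_sub hr, Real.rpow_one, Real.rpow_natCast]
  rw [← le_div_iff₀ (by positivity)] at h'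
  refine h'.trans ?_
  rw [mul_div_assoc', div_mul_eq_mul_div]
  gcongr
  linarith
end

section
/- Let n > 2m ≥ 2 and k₁ ≥ 0 be integers, and let ε > 0 and η > 0 be reals with η + k₁ + 1 > 2m. For x, y ∈ ℝⁿ define K(x,y) := ∫_{ℝⁿ} ∫_{ℝⁿ} ⟨z₁⟩^{-n−ε} ⟨z₂⟩^{-n−ε} · 𝟙_{\{|x−z₁| ≥ 1\}} |x−z₁|^{-(n−2m+k₁)} · ( ∫₀¹ λ^{η} ⟨λ|z₂−y|⟩^{-(2m−1−k₁)} ⟨λ(|x−z₁| − |z₂−y|)⟩^{-2} 𝟙_{\{|x−z₁|/2 ≤ |z₂−y| ≤ 2|x−z₁|\}} dλ ) dz₁ dz₂. Then K is admissible, i.e. sup_{x} ∫_{ℝⁿ} K(x,y) dy + sup_{y} ∫_{ℝⁿ} K(x,y) dx < ∞. -/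
open MeasureTheory ENNReal

/-!
Write `r = |x - z₁|`, `s = |z₂ - y|` and `a = 2m - 1 - k₁`, so that the power of `r` in the kernel
is `r ^ (a + 1 - n)`. The kernel is the average of a function `G(r, s)` (`radialKernel`) against
the integrable weights `⟨z₁⟩^(-n-ε)` and `⟨z₂⟩^(-n-ε)`, so by Tonelli and translation invariance
(`schur_bound`) it suffices to bound the integrals over `u ∈ ℝⁿ` of `G(r, |u|)` and of `G(|u|, s)`
uniformly in `r` and `s`.

On the support of `G` one has `r ≥ 1` and `s` comparable to `r`, hence
`λ / 2 ≤ ⟨λ s⟩ / r ≤ 3` for `0 < λ < 1`. Therefore `r ^ a ⟨λ s⟩ ^ (-a) = (⟨λ s⟩ / r) ^ (-a)` is at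
most `(λ / 2) ^ (-a) + 3 ^ (-a)` whatever the sign of `a` (`pointwise_bound`). What is left of the
power of `r` is `r ^ (-(n - 1))`, which may be traded for `s ^ (-(n - 1))`
(`radialKernel_le`); in polar coordinates it cancels the Jacobian, and the remaining radial integral
of `⟨λ (r - s)⟩ ^ (-2)` is at most `π / λ` (`lintegral_shell`). This leaves
`∫₀¹ λ ^ (η - 1) (λ ^ (-a) + 1) dλ` up to constants, which is finite because `η > 0` and `η > a`
(`lamWeight_finite`).
-/

/-- Integrating in polar coordinates, the factor `‖u‖ ^ (-(n - 1))` cancels the Jacobian, and the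
radial integral is at most `∫ (1 + (lam * ρ) ^ 2)⁻¹ dρ = π / lam`, uniformly in `t`. -/
lemma lintegral_shell (n : ℕ) (hn : 0 < n) :
    ∃ c : ℝ, 0 ≤ c ∧ ∀ lam : ℝ, 0 < lam → ∀ t : ℝ,
      ∫⁻ u : EuclideanSpace ℝ (Fin n), ENNReal.ofReal
        ((‖u‖ ^ (n - 1))⁻¹ * (1 + (lam * (‖u‖ - t)) ^ 2)⁻¹) ≤ ENNReal.ofReal (c * lam⁻¹) := by
  have : Nonempty (Fin n) := ⟨⟨0, hn⟩⟩
  set E := EuclideanSpace ℝ (Fin n)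
  refine ⟨n * (volume : Measure E).real (Metric.ball 0 1) * Real.pi, by positivity,
    fun lam hlam t ↦ ?_⟩
  have hint : Integrable (fun r : ℝ ↦ (1 + (lam * (r - t)) ^ 2)⁻¹) :=
    (integrable_inv_one_add_sq.comp_mul_left' hlam.ne').comp_sub_right t
  have hval : ∫ r : ℝ, (1 + (lam * (r - t)) ^ 2)⁻¹ = lam⁻¹ * Real.pi := by
    rw [integral_sub_right_eq_self (fun r : ℝ ↦ (1 + (lam * r) ^ 2)⁻¹) t,
      Measure.integral_comp_mul_left (fun r : ℝ ↦ (1 + r ^ 2)⁻¹), integral_univ_inv_one_add_sq,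
      abs_of_pos (inv_pos.2 hlam), smul_eq_mul]
  have hEq : Set.EqOn (fun r : ℝ ↦ r ^ (n - 1) • ((r ^ (n - 1))⁻¹ * (1 + (lam * (r - t)) ^ 2)⁻¹))
      (fun r ↦ (1 + (lam * (r - t)) ^ 2)⁻¹) (Set.Ioi 0) := by
    intro r hr
    have : r ^ (n - 1) ≠ 0 := pow_ne_zero _ (ne_of_gt hr)
    simp only [smul_eq_mul]
    rw [← mul_assoc, mul_inv_cancel₀ this, one_mul]
  have hI : Integrable (fun u : E ↦ (‖u‖ ^ (n - 1))⁻¹ * (1 + (lam * (‖u‖ - t)) ^ 2)⁻¹) := by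
    rw [integrable_fun_norm_addHaar volume
      (f := fun r : ℝ ↦ (r ^ (n - 1))⁻¹ * (1 + (lam * (r - t)) ^ 2)⁻¹), finrank_euclideanSpace_fin,
      integrableOn_congr_fun hEq measurableSet_Ioi]
    exact hint.integrableOn
  rw [← ofReal_integral_eq_lintegral_ofReal hI (ae_of_all _ fun u ↦ by positivity),
    integral_fun_norm_addHaar volume
      (fun r : ℝ ↦ (r ^ (n - 1))⁻¹ * (1 + (lam * (r - t)) ^ 2)⁻¹), finrank_euclideanSpace_fin,
      setIntegral_congr_fun measurableSet_Ioi hEq]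
  apply ENNReal.ofReal_le_ofReal
  have h1 : ∫ r in Set.Ioi (0:ℝ), (1 + (lam * (r - t)) ^ 2)⁻¹ ≤ lam⁻¹ * Real.pi :=
    hval ▸ setIntegral_le_integral hint (ae_of_all _ fun r ↦ by positivity)
  simp only [nsmul_eq_mul, smul_eq_mul]
  calc _ ≤ (n:ℝ) * (volume : Measure E).real (Metric.ball 0 1) * (lam⁻¹ * Real.pi) := by
        rw [mul_assoc]; gcongr
    _ = _ := by ring

lemma weight_finite (n : ℕ) (ε : ℝ) (hε : 0 < ε) :
    ∫⁻ z : EuclideanSpace ℝ (Fin n),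
      ENNReal.ofReal (Real.sqrt (1 + ‖z‖ ^ 2) ^ (-(n : ℝ) - ε)) ≠ ∞ := by
  have h := integrable_rpow_neg_one_add_norm_sq (E := EuclideanSpace ℝ (Fin n)) (μ := volume)
    (r := n + ε) (by simp [hε])
  refine ne_of_lt ?_
  convert h.lintegral_lt_top using 4 with z
  rw [Real.sqrt_eq_rpow, ← Real.rpow_mul (by positivity)]
  ring_nf

/-- The weight in the spectral variable `lam` that majorizes `lam ^ η * (⟨lam * s⟩ / r) ^ (-a)` on
the support of the kernel; the factor `2 ^ (n - 1)` is the cost of replacing `r ^ (-(n - 1))` by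
`s ^ (-(n - 1))`. -/
noncomputable def lamWeight (n : ℕ) (a η lam : ℝ) : ℝ :=
  2 ^ (n - 1) * (lam ^ η * (2 ^ a * lam ^ (-a) + 3 ^ (-a)))

lemma lamWeight_nonneg (n : ℕ) (a η : ℝ) {lam : ℝ} (h : 0 < lam) : 0 ≤ lamWeight n a η lam := by
  unfold lamWeight; positivity

lemma lamWeight_finite (n : ℕ) (a η c : ℝ) (hη : 0 < η) (ha : a < η) :
    ∫⁻ lam in Set.Ioo (0 : ℝ) 1, ENNReal.ofReal (lamWeight n a η lam * (c * lam⁻¹)) ≠ ∞ := by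
  have h1 : IntegrableOn (fun x : ℝ ↦ x ^ (η - a - 1)) (Set.Ioo 0 1) :=
    (intervalIntegral.integrableOn_Ioo_rpow_iff one_pos).2 (by linarith)
  have h2 : IntegrableOn (fun x : ℝ ↦ x ^ (η - 1)) (Set.Ioo 0 1) :=
    (intervalIntegral.integrableOn_Ioo_rpow_iff one_pos).2 (by linarith)
  have h : IntegrableOn (fun x : ℝ ↦ (2 ^ (n - 1) * c * 2 ^ a) * x ^ (η - a - 1)
      + (2 ^ (n - 1) * c * 3 ^ (-a)) * x ^ (η - 1)) (Set.Ioo 0 1) :=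
    (h1.const_mul _).add (h2.const_mul _)
  refine ne_of_lt (lt_of_eq_of_lt ?_ h.lintegral_lt_top)
  refine setLIntegral_congr_fun measurableSet_Ioo fun x hx ↦ ?_
  have hx0 : 0 < x := hx.1
  simp only [lamWeight]
  rw [Real.rpow_sub_one hx0.ne', Real.rpow_sub_one hx0.ne', Real.rpow_sub hx0, Real.rpow_neg hx0.le]
  congr 1
  ring

/-- The integrand bound behind the theorem, with no sign condition on `a`. -/
lemma pointwise_bound (n : ℕ) (hn : 0 < n) (a η : ℝ) {r s lam : ℝ} (hr : 1 ≤ r)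
    (h1 : r / 2 ≤ s) (h2 : s ≤ 2 * r) (hl : 0 < lam) (hl1 : lam < 1) :
    r ^ (a + 1 - n) * (lam ^ η * Real.sqrt (1 + (lam * s) ^ 2) ^ (-a) *
      Real.sqrt (1 + (lam * (r - s)) ^ 2) ^ (-(2 : ℝ))) ≤
    lam ^ η * (2 ^ a * lam ^ (-a) + 3 ^ (-a)) *
      ((r ^ (n - 1))⁻¹ * (1 + (lam * (r - s)) ^ 2)⁻¹) := by
  have hr0 : 0 < r := by linarith
  have hs0 : 0 < s := by linarith
  have e1 : Real.sqrt (1 + (lam * (r - s)) ^ 2) ^ (-(2 : ℝ)) = (1 + (lam * (r - s)) ^ 2)⁻¹ := by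
    rw [Real.rpow_neg (Real.sqrt_nonneg _), Real.rpow_two, Real.sq_sqrt (by positivity)]
  have e2 : r ^ (a + 1 - n) = r ^ a * (r ^ (n - 1))⁻¹ := by
    rw [show a + 1 - n = a - ((n - 1 : ℕ) : ℝ) by rw [Nat.cast_pred hn]; ring,
      Real.rpow_sub hr0, Real.rpow_natCast, div_eq_mul_inv]
  set b := Real.sqrt (1 + (lam * s) ^ 2)
  have hb0 : 0 < b := by positivity
  have hlo : lam / 2 ≤ b / r := by
    rw [le_div_iff₀ hr0]
    refine Real.le_sqrt_of_sq_le ?_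
    have : lam / 2 * r ≤ lam * s := by nlinarith
    have : (lam / 2 * r) ^ 2 ≤ (lam * s) ^ 2 := by gcongr
    linarith
  have hhi : b / r ≤ 3 := by
    rw [div_le_iff₀ hr0]
    refine Real.sqrt_le_iff.2 ⟨by positivity, ?_⟩
    have : lam * s ≤ 1 * (2 * r) := by gcongr
    have : (lam * s) ^ 2 ≤ (1 * (2 * r)) ^ 2 := by gcongr
    nlinarith
  have key : r ^ a * b ^ (-a) ≤ 2 ^ a * lam ^ (-a) + 3 ^ (-a) := by
    have : r ^ a * b ^ (-a) = (b / r) ^ (-a) := by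
      rw [Real.div_rpow hb0.le hr0.le, Real.rpow_neg hr0.le, div_inv_eq_mul, mul_comm]
    rw [this]
    -- A negative power is controlled by the lower bound on `b / r`, a positive one by the upper.
    rcases le_total 0 a with ha | ha
    · have h3 : (b / r) ^ (-a) ≤ (lam / 2) ^ (-a) :=
        Real.rpow_le_rpow_of_nonpos (by positivity) hlo (by linarith)
      have h4 : (lam / 2) ^ (-a) = 2 ^ a * lam ^ (-a) := by
        rw [Real.div_rpow hl.le (by norm_num), Real.rpow_neg (by norm_num : (0:ℝ) ≤ 2),
          div_inv_eq_mul, mul_comm]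
      have : (0:ℝ) < 3 ^ (-a) := by positivity
      linarith
    · have h3 : (b / r) ^ (-a) ≤ 3 ^ (-a) :=
        Real.rpow_le_rpow (by positivity) hhi (by linarith)
      have : (0:ℝ) < 2 ^ a * lam ^ (-a) := by positivity
      linarith
  rw [e1, e2]
  calc _ = (r ^ a * b ^ (-a)) * (lam ^ η * ((r ^ (n - 1))⁻¹ * (1 + (lam * (r - s)) ^ 2)⁻¹)) := by
        ring
    _ ≤ (2 ^ a * lam ^ (-a) + 3 ^ (-a)) *
        (lam ^ η * ((r ^ (n - 1))⁻¹ * (1 + (lam * (r - s)) ^ 2)⁻¹)) := by gcongr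
    _ = _ := by ring

/-- The kernel as a function of the two radii `r = ‖x - z₁‖` and `s = ‖z₂ - y‖`, without the weights
in `z₁` and `z₂`; `b` is the exponent of `r`. -/
noncomputable def radialKernel (a b η r s : ℝ) : ℝ≥0∞ :=
  (if 1 ≤ r then 1 else 0) * ENNReal.ofReal (r ^ b) *
    ∫⁻ lam in Set.Ioo (0 : ℝ) 1,
      ENNReal.ofReal (lam ^ η * Real.sqrt (1 + (lam * s) ^ 2) ^ (-a) *
        Real.sqrt (1 + (lam * (r - s)) ^ 2) ^ (-(2 : ℝ))) *
      (if r / 2 ≤ s ∧ s ≤ 2 * r then 1 else 0)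

lemma measurable_radialKernel (a b η : ℝ) :
    Measurable fun p : ℝ × ℝ ↦ radialKernel a b η p.1 p.2 := by
  unfold radialKernel
  refine Measurable.mul (Measurable.mul ?_ (by fun_prop)) ?_
  · exact Measurable.ite (measurableSet_le measurable_const measurable_fst)
      measurable_const measurable_const
  · refine Measurable.lintegral_prod_right' (f := fun q : (ℝ × ℝ) × ℝ ↦
      ENNReal.ofReal (q.2 ^ η * Real.sqrt (1 + (q.2 * q.1.2) ^ 2) ^ (-a) *
        Real.sqrt (1 + (q.2 * (q.1.1 - q.1.2)) ^ 2) ^ (-(2 : ℝ))) *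
      (if q.1.1 / 2 ≤ q.1.2 ∧ q.1.2 ≤ 2 * q.1.1 then 1 else 0)) ?_
    refine Measurable.mul (by fun_prop) (Measurable.ite ?_ measurable_const measurable_const)
    have h1 : MeasurableSet {q : (ℝ × ℝ) × ℝ | q.1.1 / 2 ≤ q.1.2} :=
      measurableSet_le (by fun_prop) (by fun_prop)
    have h2 : MeasurableSet {q : (ℝ × ℝ) × ℝ | q.1.2 ≤ 2 * q.1.1} :=
      measurableSet_le (by fun_prop) (by fun_prop)
    exact h1.inter h2

/-- Majorant of the radial kernel that is singular in either one of the two radii: `v` is the radius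
that will be integrated over and `t` the one that is kept fixed. -/
lemma radialKernel_le (n : ℕ) (hn : 0 < n) (a η r s v t : ℝ)
    (hv : (v = r ∧ t = s) ∨ (v = s ∧ t = r)) :
    radialKernel a (a + 1 - n) η r s ≤ ∫⁻ lam in Set.Ioo (0 : ℝ) 1,
      ENNReal.ofReal (lamWeight n a η lam) *
        ENNReal.ofReal ((v ^ (n - 1))⁻¹ * (1 + (lam * (v - t)) ^ 2)⁻¹) := by
  unfold radialKernel
  by_cases hr : 1 ≤ r
  swap
  · simp [hr]
  by_cases hs : r / 2 ≤ s ∧ s ≤ 2 * r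
  swap
  · simp [hs]
  simp only [if_pos hr, if_pos hs, one_mul, mul_one]
  rw [← lintegral_const_mul' _ _ ENNReal.ofReal_ne_top]
  refine setLIntegral_mono' measurableSet_Ioo fun lam hlam ↦ ?_
  have hr0 : 0 < r := by linarith
  have hs0 : 0 < s := by linarith [hs.1]
  have hl0 : 0 < lam := hlam.1
  have hl := lamWeight_nonneg n a η hl0
  rw [← ENNReal.ofReal_mul (by positivity), ← ENNReal.ofReal_mul hl]
  refine ENNReal.ofReal_le_ofReal
    ((pointwise_bound n hn a η hr hs.1 hs.2 hlam.1 hlam.2).trans ?_)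
  have hv0 : 0 < v := by rcases hv with ⟨h, -⟩ | ⟨h, -⟩ <;> rw [h] <;> assumption
  have hvr : (r ^ (n - 1))⁻¹ ≤ 2 ^ (n - 1) * (v ^ (n - 1))⁻¹ := by
    have h2 : v ≤ 2 * r := by
      rcases hv with ⟨h, -⟩ | ⟨h, -⟩ <;> rw [h]
      · linarith
      · exact hs.2
    have h3 : v ^ (n - 1) ≤ 2 ^ (n - 1) * r ^ (n - 1) := by
      rw [← mul_pow]; gcongr
    rw [← div_eq_mul_inv, le_div_iff₀ (by positivity), inv_mul_le_iff₀ (by positivity)]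
    linarith
  have hsq : (lam * (r - s)) ^ 2 = (lam * (v - t)) ^ 2 := by
    rcases hv with ⟨rfl, rfl⟩ | ⟨rfl, rfl⟩ <;> ring
  rw [hsq, lamWeight]
  calc _ ≤ lam ^ η * (2 ^ a * lam ^ (-a) + 3 ^ (-a)) *
        ((2 ^ (n - 1) * (v ^ (n - 1))⁻¹) * (1 + (lam * (v - t)) ^ 2)⁻¹) := by gcongr
    _ = _ := by ring

lemma radialKernel_bound (n : ℕ) (hn : 0 < n) (a η : ℝ) (hη : 0 < η) (ha : a < η) :
    ∃ M : ℝ≥0∞, M ≠ ∞ ∧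
      (∀ r, ∫⁻ u : EuclideanSpace ℝ (Fin n), radialKernel a (a + 1 - n) η r ‖u‖ ≤ M) ∧
      (∀ s, ∫⁻ u : EuclideanSpace ℝ (Fin n), radialKernel a (a + 1 - n) η ‖u‖ s ≤ M) := by
  obtain ⟨c, -, hc⟩ := lintegral_shell n hn
  have main : ∀ t, ∫⁻ u : EuclideanSpace ℝ (Fin n), ∫⁻ lam in Set.Ioo (0 : ℝ) 1,
      ENNReal.ofReal (lamWeight n a η lam) *
        ENNReal.ofReal ((‖u‖ ^ (n - 1))⁻¹ * (1 + (lam * (‖u‖ - t)) ^ 2)⁻¹) ≤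
      ∫⁻ lam in Set.Ioo (0 : ℝ) 1, ENNReal.ofReal (lamWeight n a η lam * (c * lam⁻¹)) := by
    intro t
    rw [lintegral_lintegral_swap (by unfold Function.uncurry lamWeight; fun_prop)]
    refine setLIntegral_mono' measurableSet_Ioo fun lam hlam ↦ ?_
    rw [lintegral_const_mul' _ _ ENNReal.ofReal_ne_top,
      ENNReal.ofReal_mul (lamWeight_nonneg n a η hlam.1)]
    gcongr
    exact hc lam hlam.1 t
  refine ⟨_, lamWeight_finite n a η c hη ha, fun r ↦ ?_, fun s ↦ ?_⟩
  · exact (lintegral_mono fun u ↦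
      radialKernel_le n hn a η r ‖u‖ ‖u‖ r (Or.inr ⟨rfl, rfl⟩)).trans (main r)
  · exact (lintegral_mono fun u ↦
      radialKernel_le n hn a η ‖u‖ s ‖u‖ s (Or.inl ⟨rfl, rfl⟩)).trans (main s)

/-- Tonelli: a uniform bound on `∫ k u z₁ z₂ du` survives averaging against `w z₁ * w z₂`. -/
lemma schur_bound {E : Type*} [MeasurableSpace E] (μ : Measure E) [SFinite μ]
    (w : E → ℝ≥0∞) (hw : Measurable w) (k : E → E → E → ℝ≥0∞)
    (hk : Measurable fun p : E × E × E ↦ k p.1 p.2.1 p.2.2) (M : ℝ≥0∞)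
    (hM : ∀ z₁ z₂, ∫⁻ u, k u z₁ z₂ ∂μ ≤ M) :
    ∫⁻ u, ∫⁻ z₁, ∫⁻ z₂, w z₁ * w z₂ * k u z₁ z₂ ∂μ ∂μ ∂μ ≤
      (∫⁻ z, w z ∂μ) * (∫⁻ z, w z ∂μ) * M := by
  have hF : Measurable fun p : (E × E) × E ↦ w p.1.2 * w p.2 * k p.1.1 p.1.2 p.2 := by
    have := hk.comp (f := fun p : (E × E) × E ↦ (p.1.1, p.1.2, p.2)) (by fun_prop)
    exact Measurable.mul (by fun_prop) this
  rw [lintegral_lintegral_swap (Measurable.lintegral_prod_right hF).aemeasurable]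
  calc ∫⁻ z₁, ∫⁻ u, ∫⁻ z₂, w z₁ * w z₂ * k u z₁ z₂ ∂μ ∂μ ∂μ
      ≤ ∫⁻ z₁, ∫⁻ z₂, w z₁ * w z₂ * M ∂μ ∂μ := by
        refine lintegral_mono fun z₁ ↦ ?_
        have hG : Measurable fun p : E × E ↦ w z₁ * w p.2 * k p.1 z₁ p.2 :=
          hF.comp (f := fun p : E × E ↦ ((p.1, z₁), p.2)) (by fun_prop)
        rw [lintegral_lintegral_swap hG.aemeasurable]
        refine lintegral_mono fun z₂ ↦ ?_
        have : Measurable fun u ↦ k u z₁ z₂ :=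
          hk.comp (f := fun u ↦ (u, z₁, z₂)) (by fun_prop)
        simp only
        rw [lintegral_const_mul _ this]
        gcongr
        exact hM z₁ z₂
    _ = _ := by
        simp_rw [mul_assoc]
        have (z₁ : E) : ∫⁻ z₂, w z₁ * (w z₂ * M) ∂μ = w z₁ * ((∫⁻ z, w z ∂μ) * M) := by
          rw [lintegral_const_mul _ (by fun_prop), lintegral_mul_const _ hw]
        simp_rw [this]
        rw [lintegral_mul_const _ hw]

/-- Admissibility of the kernel arising in the regime `r₁ ≈ r₂ ≫ 1`. -/
theorem stmt_15 (n m k₁ : ℕ) (hm : 1 ≤ m) (hn : 2 * m < n) (ε η : ℝ)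
    (hε : 0 < ε) (hη : 0 < η) (hcond : 2 * (m : ℝ) < η + k₁ + 1)
    (K : EuclideanSpace ℝ (Fin n) → EuclideanSpace ℝ (Fin n) → ℝ≥0∞)
    (hK : ∀ x y, K x y =
      ∫⁻ z₁, ∫⁻ z₂,
        ENNReal.ofReal (Real.sqrt (1 + ‖z₁‖ ^ 2) ^ (-(n : ℝ) - ε)) *
        ENNReal.ofReal (Real.sqrt (1 + ‖z₂‖ ^ 2) ^ (-(n : ℝ) - ε)) *
        (if 1 ≤ ‖x - z₁‖ then 1 else 0) *
        ENNReal.ofReal (‖x - z₁‖ ^ (-((n : ℝ) - 2 * m + k₁))) *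
        ∫⁻ lam in Set.Ioo (0 : ℝ) 1,
          ENNReal.ofReal (lam ^ η *
            Real.sqrt (1 + (lam * ‖z₂ - y‖) ^ 2) ^ (-(2 * (m : ℝ) - 1 - k₁)) *
            Real.sqrt (1 + (lam * (‖x - z₁‖ - ‖z₂ - y‖)) ^ 2) ^ (-(2 : ℝ))) *
          (if ‖x - z₁‖ / 2 ≤ ‖z₂ - y‖ ∧ ‖z₂ - y‖ ≤ 2 * ‖x - z₁‖ then 1 else 0)) :
    ∃ B : ℝ, (∀ x, ∫⁻ y, K x y ≤ ENNReal.ofReal B) ∧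
      (∀ y, ∫⁻ x, K x y ≤ ENNReal.ofReal B) := by
  set a : ℝ := 2 * (m : ℝ) - 1 - k₁ with ha
  set w : EuclideanSpace ℝ (Fin n) → ℝ≥0∞ :=
    fun z ↦ ENNReal.ofReal (Real.sqrt (1 + ‖z‖ ^ 2) ^ (-(n : ℝ) - ε)) with hw
  have hwm : Measurable w := by fun_prop
  have hwfin : ∫⁻ z, w z ≠ ∞ := weight_finite n ε hε
  have hexp : -((n : ℝ) - 2 * m + k₁) = a + 1 - n := by rw [ha]; ring
  have hK' : ∀ x y, K x y = ∫⁻ z₁, ∫⁻ z₂,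
      w z₁ * w z₂ * radialKernel a (a + 1 - n) η ‖x - z₁‖ ‖z₂ - y‖ := by
    intro x y
    rw [hK]
    simp only [radialKernel, hexp, hw, mul_assoc]
  obtain ⟨M, hMfin, hM₁, hM₂⟩ := radialKernel_bound n (by omega) a η hη (by rw [ha]; linarith)
  have hG := measurable_radialKernel a (a + 1 - n) η
  have hBfin : (∫⁻ z, w z) * (∫⁻ z, w z) * M ≠ ∞ :=
    ENNReal.mul_ne_top (ENNReal.mul_ne_top hwfin hwfin) hMfin
  refine ⟨((∫⁻ z, w z) * (∫⁻ z, w z) * M).toReal, fun x ↦ ?_, fun y ↦ ?_⟩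
  · rw [ENNReal.ofReal_toReal hBfin]
    simp_rw [hK']
    refine schur_bound volume w hwm
      (fun y z₁ z₂ ↦ radialKernel a (a + 1 - n) η ‖x - z₁‖ ‖z₂ - y‖)
      (hG.comp (f := fun p : EuclideanSpace ℝ (Fin n) × EuclideanSpace ℝ (Fin n) ×
        EuclideanSpace ℝ (Fin n) ↦ (‖x - p.2.1‖, ‖p.2.2 - p.1‖)) (by fun_prop)) M
      fun z₁ z₂ ↦ ?_
    rw [lintegral_sub_left_eq_self
      (fun u ↦ radialKernel a (a + 1 - n) η ‖x - z₁‖ ‖u‖) z₂]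
    exact hM₁ _
  · rw [ENNReal.ofReal_toReal hBfin]
    simp_rw [hK']
    refine schur_bound volume w hwm
      (fun x z₁ z₂ ↦ radialKernel a (a + 1 - n) η ‖x - z₁‖ ‖z₂ - y‖)
      (hG.comp (f := fun p : EuclideanSpace ℝ (Fin n) × EuclideanSpace ℝ (Fin n) ×
        EuclideanSpace ℝ (Fin n) ↦ (‖p.1 - p.2.1‖, ‖p.2.2 - y‖)) (by fun_prop)) M
      fun z₁ z₂ ↦ ?_
    rw [lintegral_sub_right_eq_self
      (fun u ↦ radialKernel a (a + 1 - n) η ‖u‖ ‖z₂ - y‖) z₁]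
    exact hM₂ _
end

section
/- Let n > 2m ≥ 2 and k₁ ≥ 0 be integers, and let ε > 0 and η be reals with η + k₁ + 1 > 2m. For x, y ∈ ℝⁿ define K(x,y) := ∫_{ℝⁿ} ∫_{ℝⁿ} ⟨z₁⟩^{-n−ε} ⟨z₂⟩^{-n−ε} · ( |x−z₁|^{-η−1} + |x−z₁|^{k₁−2m−1/2} ) · 𝟙_{\{|x−z₁| ≥ 2⟨z₂−y⟩\}} · |x−z₁|^{-(n−2m+k₁)} dz₁ dz₂. Then K is admissible, i.e. sup_{x} ∫_{ℝⁿ} K(x,y) dy + sup_{y} ∫_{ℝⁿ} K(x,y) dx < ∞. -/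
open MeasureTheory ENNReal

/-!
On the support of the indicator, `r = ‖x - z₁‖` dominates both `⟨z₂ - y⟩ / 2` and `⟨x - z₁⟩ / 2`.
The powers of `r` combine to `r ^ (-(n + δ)) + r ^ (-(n + 1/2))` with `δ = η + k₁ + 1 - 2 m > 0`.
Hence the integrand is at most `⟨z₁⟩ ^ (-n-ε) ⟨z₂⟩ ^ (-n-ε) A(u)`, where
`A(u) = 2 ^ (n + δ) ⟨u⟩ ^ (-(n + δ)) + 2 ^ (n + 1/2) ⟨u⟩ ^ (-(n + 1/2))` is integrable and `u` may be
taken to be either `z₂ - y` (for the integral in `y`) or `x - z₁` (for the integral in `x`); this is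
`integrand_le`. In both cases Tonelli and translation invariance give the same bound `C * (C * ∫ A)`
with `C = ∫ ⟨z⟩ ^ (-n-ε)`.
-/

/-- The weight `⟨u⟩ ^ (-(n + s))` on `ℝⁿ`. -/
noncomputable def bracketWeight (n : ℕ) (s : ℝ) (u : EuclideanSpace ℝ (Fin n)) : ℝ≥0∞ :=
  ENNReal.ofReal (Real.sqrt (1 + ‖u‖ ^ 2) ^ (-(n : ℝ) - s))

lemma measurable_bracketWeight (n : ℕ) (s : ℝ) : Measurable (bracketWeight n s) := by
  unfold bracketWeight
  fun_prop

lemma bracketWeight_neg (n : ℕ) (s : ℝ) (u : EuclideanSpace ℝ (Fin n)) :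
    bracketWeight n s (-u) = bracketWeight n s u := by
  simp [bracketWeight]

lemma lintegral_bracketWeight_lt_top (n : ℕ) {s : ℝ} (hs : 0 < s) :
    ∫⁻ u, bracketWeight n s u < ∞ := by
  have h := integrable_rpow_neg_one_add_norm_sq (E := EuclideanSpace ℝ (Fin n)) (μ := volume)
    (r := n + s) (by simpa using hs)
  have h2 := h.lintegral_lt_top
  convert h2 using 4 with u
  rw [bracketWeight, Real.sqrt_eq_rpow, ← Real.rpow_mul (by positivity)]
  congr 2
  ring

/-- The integrable majorant `A` of the radial factor of the integrand. -/
noncomputable def majorant (n : ℕ) (δ : ℝ) (u : EuclideanSpace ℝ (Fin n)) : ℝ≥0∞ :=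
  ENNReal.ofReal (2 ^ ((n : ℝ) + δ)) * bracketWeight n δ u +
    ENNReal.ofReal (2 ^ ((n : ℝ) + 1 / 2)) * bracketWeight n (1 / 2) u

lemma measurable_majorant (n : ℕ) (δ : ℝ) : Measurable (majorant n δ) :=
  ((measurable_bracketWeight n δ).const_mul _).add ((measurable_bracketWeight n _).const_mul _)

lemma majorant_neg (n : ℕ) (δ : ℝ) (u : EuclideanSpace ℝ (Fin n)) :
    majorant n δ (-u) = majorant n δ u := by
  simp [majorant, bracketWeight_neg]

lemma lintegral_majorant_lt_top (n : ℕ) {δ : ℝ} (hδ : 0 < δ) : ∫⁻ u, majorant n δ u < ∞ := by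
  unfold majorant
  rw [lintegral_add_left ((measurable_bracketWeight n δ).const_mul _),
    lintegral_const_mul _ (measurable_bracketWeight n δ),
    lintegral_const_mul _ (measurable_bracketWeight n _)]
  exact ENNReal.add_lt_top.2
    ⟨ENNReal.mul_lt_top ENNReal.ofReal_lt_top (lintegral_bracketWeight_lt_top n hδ),
      ENNReal.mul_lt_top ENNReal.ofReal_lt_top (lintegral_bracketWeight_lt_top n (by norm_num))⟩

lemma rpow_le_bracketWeight {n : ℕ} {s r : ℝ} (hs : 0 ≤ s) (u : EuclideanSpace ℝ (Fin n))
    (hr : Real.sqrt (1 + ‖u‖ ^ 2) ≤ 2 * r) :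
    ENNReal.ofReal (r ^ (-(n : ℝ) - s)) ≤
      ENNReal.ofReal (2 ^ ((n : ℝ) + s)) * bracketWeight n s u := by
  have hq : 0 < Real.sqrt (1 + ‖u‖ ^ 2) := by positivity
  unfold bracketWeight
  rw [← ENNReal.ofReal_mul (by positivity)]
  apply ENNReal.ofReal_le_ofReal
  have hp : -(n : ℝ) - s ≤ 0 := by
    have : (0 : ℝ) ≤ n := by positivity
    linarith
  calc r ^ (-(n : ℝ) - s) ≤ (Real.sqrt (1 + ‖u‖ ^ 2) / 2) ^ (-(n : ℝ) - s) :=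
        Real.rpow_le_rpow_of_nonpos (by positivity) (by linarith) hp
    _ = _ := by
        rw [Real.div_rpow hq.le (by norm_num), div_eq_mul_inv, ← Real.rpow_neg (by norm_num),
          mul_comm]
        congr 2
        ring

/-- The radial factor of the integrand is at most `A(u)` for every `u` with `⟨u⟩ ≤ 2 r`. -/
lemma radial_le {n m k₁ : ℕ} {η r : ℝ} (hcond : 2 * (m : ℝ) < η + k₁ + 1) (hr : 0 < r)
    (u : EuclideanSpace ℝ (Fin n)) (hu : Real.sqrt (1 + ‖u‖ ^ 2) ≤ 2 * r) :
    (ENNReal.ofReal (r ^ (-η - 1)) + ENNReal.ofReal (r ^ ((k₁ : ℝ) - 2 * m - 1 / 2))) *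
        ENNReal.ofReal (r ^ (-((n : ℝ) - 2 * m + k₁))) ≤
      majorant n (η + k₁ + 1 - 2 * m) u := by
  rw [add_mul, ← ENNReal.ofReal_mul (by positivity), ← ENNReal.ofReal_mul (by positivity),
    ← Real.rpow_add hr, ← Real.rpow_add hr]
  have e1 : -η - 1 + -((n : ℝ) - 2 * m + k₁) = -(n : ℝ) - (η + k₁ + 1 - 2 * m) := by ring
  have e2 : (k₁ : ℝ) - 2 * m - 1 / 2 + -((n : ℝ) - 2 * m + k₁) = -(n : ℝ) - 1 / 2 := by ring
  rw [e1, e2]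
  exact add_le_add (rpow_le_bracketWeight (by linarith) u hu)
    (rpow_le_bracketWeight (by norm_num) u hu)

/-- The integrand is dominated both through `w = z₂ - y` and through `v = x - z₁`. -/
lemma integrand_le {n m k₁ : ℕ} {η : ℝ} (hcond : 2 * (m : ℝ) < η + k₁ + 1) (a b : ℝ≥0∞)
    (v w u : EuclideanSpace ℝ (Fin n)) (hu : u = v ∨ u = w) :
    a * b * (ENNReal.ofReal (‖v‖ ^ (-η - 1)) +
          ENNReal.ofReal (‖v‖ ^ ((k₁ : ℝ) - 2 * m - 1 / 2))) *
        (if 2 * Real.sqrt (1 + ‖w‖ ^ 2) ≤ ‖v‖ then 1 else 0) *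
        ENNReal.ofReal (‖v‖ ^ (-((n : ℝ) - 2 * m + k₁))) ≤
      a * (b * majorant n (η + k₁ + 1 - 2 * m) u) := by
  split_ifs with h
  · have h1 : 1 ≤ Real.sqrt (1 + ‖w‖ ^ 2) := Real.one_le_sqrt.2 (by nlinarith [sq_nonneg ‖w‖])
    have hv : 2 ≤ ‖v‖ := by linarith
    rw [mul_one, mul_assoc, mul_assoc a b]
    gcongr
    apply radial_le hcond (by linarith)
    rcases hu with rfl | rfl
    · exact Real.sqrt_le_iff.2 ⟨by positivity, by nlinarith⟩
    · linarith
  · simp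

/-- Admissibility of the kernel arising in the regime `r₁ ≫ ⟨r₂⟩`. -/
theorem stmt_16 (n m k₁ : ℕ) (hm : 1 ≤ m) (hn : 2 * m < n) (ε η : ℝ)
    (hε : 0 < ε) (hcond : 2 * (m : ℝ) < η + k₁ + 1)
    (K : EuclideanSpace ℝ (Fin n) → EuclideanSpace ℝ (Fin n) → ℝ≥0∞)
    (hK : ∀ x y, K x y =
      ∫⁻ z₁, ∫⁻ z₂,
        ENNReal.ofReal (Real.sqrt (1 + ‖z₁‖ ^ 2) ^ (-(n : ℝ) - ε)) *
        ENNReal.ofReal (Real.sqrt (1 + ‖z₂‖ ^ 2) ^ (-(n : ℝ) - ε)) *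
        (ENNReal.ofReal (‖x - z₁‖ ^ (-η - 1)) +
          ENNReal.ofReal (‖x - z₁‖ ^ ((k₁ : ℝ) - 2 * m - 1 / 2))) *
        (if 2 * Real.sqrt (1 + ‖z₂ - y‖ ^ 2) ≤ ‖x - z₁‖ then 1 else 0) *
        ENNReal.ofReal (‖x - z₁‖ ^ (-((n : ℝ) - 2 * m + k₁)))) :
    ∃ B : ℝ, (∀ x, ∫⁻ y, K x y ≤ ENNReal.ofReal B) ∧
      (∀ y, ∫⁻ x, K x y ≤ ENNReal.ofReal B) := by
  set J := bracketWeight n ε with hJ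
  set A := majorant n (η + k₁ + 1 - 2 * m) with hA
  have mJ : Measurable J := measurable_bracketWeight n ε
  have mA : Measurable A := measurable_majorant n _
  have hJfin : ∫⁻ u, J u < ∞ := lintegral_bracketWeight_lt_top n hε
  have hAfin : ∫⁻ u, A u < ∞ := lintegral_majorant_lt_top n (by linarith)
  set C := ∫⁻ u, J u with hC
  have hfin : C * (C * ∫⁻ u, A u) ≠ ∞ :=
    (ENNReal.mul_lt_top hJfin (ENNReal.mul_lt_top hJfin hAfin)).ne
  have hKJ : ∀ x y u, ∀ z₁ z₂, (u = x - z₁ ∨ u = z₂ - y) → _ :=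
    fun x y u z₁ z₂ hu ↦ integrand_le hcond (J z₁) (J z₂) (x - z₁) (z₂ - y) u hu
  -- The convolution `J * A` (`A` is even) has total mass `C * ∫ A`.
  have hconv : ∫⁻ y, ∫⁻ z, J z * A (z - y) = C * ∫⁻ u, A u := by
    rw [lintegral_lintegral_swap (by fun_prop)]
    have : ∀ z, ∫⁻ y, J z * A (z - y) = J z * ∫⁻ u, A u := fun z ↦ by
      rw [lintegral_const_mul _ (by fun_prop), lintegral_sub_left_eq_self (fun u ↦ A u) z]
    simp_rw [this]
    rw [lintegral_mul_const _ mJ]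
  refine ⟨(C * (C * ∫⁻ u, A u)).toReal, fun x ↦ ?_, fun y ↦ ?_⟩ <;>
    rw [ENNReal.ofReal_toReal hfin]
  · calc ∫⁻ y, K x y ≤ ∫⁻ y, C * ∫⁻ z₂, J z₂ * A (z₂ - y) := by
          refine lintegral_mono fun y ↦ ?_
          rw [hK]
          calc _ ≤ ∫⁻ z₁, ∫⁻ z₂, J z₁ * (J z₂ * A (z₂ - y)) :=
                lintegral_mono fun z₁ ↦ lintegral_mono fun z₂ ↦
                  hKJ x y (z₂ - y) z₁ z₂ (Or.inr rfl)
            _ = _ := by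
                have : ∀ z₁, ∫⁻ z₂, J z₁ * (J z₂ * A (z₂ - y)) =
                    J z₁ * ∫⁻ z₂, J z₂ * A (z₂ - y) := fun z₁ ↦
                  lintegral_const_mul _ (by fun_prop)
                simp_rw [this]
                rw [lintegral_mul_const _ mJ]
      _ = _ := by
          rw [lintegral_const_mul' _ _ hJfin.ne, hconv]
  · calc ∫⁻ x, K x y ≤ ∫⁻ x, C * ∫⁻ z₁, J z₁ * A (z₁ - x) := by
          refine lintegral_mono fun x ↦ ?_
          rw [hK]
          calc _ ≤ ∫⁻ z₁, ∫⁻ z₂, J z₁ * (J z₂ * A (x - z₁)) :=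
                lintegral_mono fun z₁ ↦ lintegral_mono fun z₂ ↦
                  hKJ x y (x - z₁) z₁ z₂ (Or.inl rfl)
            _ = _ := by
                have : ∀ z₁, ∫⁻ z₂, J z₁ * (J z₂ * A (x - z₁)) =
                    C * (J z₁ * A (z₁ - x)) := fun z₁ ↦ by
                  rw [lintegral_const_mul _ (by fun_prop), lintegral_mul_const _ mJ,
                    ← neg_sub z₁ x, hA, majorant_neg]
                  ring
                simp_rw [this]
                rw [lintegral_const_mul' _ _ hJfin.ne]
      _ = _ := by
          rw [lintegral_const_mul' _ _ hJfin.ne, hconv]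
end
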